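/- Let f be a multicritical circle map with irrational rotation number and chosen critical point c_0, and let P*_n(c_0) be the auxiliary partition of the circle consisting of all images f^j(Δ_{k_i}) and f^j(G_i) (0 ≤ i ≤ r, 0 ≤ j ≤ q_{n+1}−1), all intervals f^j(I_{n+2}(c_0)) (0 ≤ j ≤ q_{n+1}−1), and all short atoms f^ℓ(I_{n+1}(c_0)) (0 ≤ ℓ ≤ q_n−1). Then any two consecutive atoms of P*_n(c_0) are comparable: there is a constant K > 1 depending only on f such that any two atoms of P*_n(c_0) sharing an endpoint have lengths within a factor K of each other. -/

import Mathlib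

open Set Filter MeasureTheory

noncomputable section

/-- The Schwarzian derivative `Sf = (f''/f')' - (1/2) (f''/f')^2`. -/
def schwarzianDeriv (f : ℝ → ℝ) (x : ℝ) : ℝ :=
  deriv (fun y => deriv (deriv f) y / deriv f y) x
    - (1 / 2) * (deriv (deriv f) x / deriv f x) ^ 2

/-- A multicritical circle map, described through its lift `F : ℝ → ℝ` to the real line.
It is an orientation-preserving `C^3` circle homeomorphism with finitely many critical
points `c 0, …, c (N-1)`, each of non-flat power-law type: near `c i` the derivative is
pinched between two multiples of `|x - c i| ^ (s i - 1)` with `s i > 1`, the Schwarzian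
derivative is negative on a punctured neighborhood of each critical point, and
`log (F')` has bounded variation (bounded by `v`) off the critical neighborhoods. -/
structure MCM where
  /-- the lift of the circle map -/
  F : ℝ → ℝ
  smooth : ContDiff ℝ 3 F
  mono : StrictMono F
  deg1 : ∀ x, F (x + 1) = F x + 1
  /-- number of critical points -/
  N : ℕ
  N_pos : 0 < N
  /-- the critical points (one representative in `[0,1)` for each) -/
  c : Fin N → ℝ
  c_mem : ∀ i, c i ∈ Set.Ico (0 : ℝ) 1
  c_inj : Function.Injective c
  isCrit : ∀ i, deriv F (c i) = 0
  critOnly : ∀ x, deriv F x = 0 → ∃ (i : Fin N) (k : ℤ), x = c i + (k : ℝ)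
  /-- neighborhoods of the critical points -/
  W : Fin N → Set ℝ
  W_open : ∀ i, IsOpen (W i)
  c_mem_W : ∀ i, c i ∈ W i
  /-- the criticalities (power-law exponents) -/
  s : Fin N → ℝ
  s_gt_one : ∀ i, 1 < s i
  al : Fin N → ℝ
  be : Fin N → ℝ
  al_pos : ∀ i, 0 < al i
  al_lt_be : ∀ i, al i < be i
  powerLaw : ∀ i, ∀ x ∈ W i, x ≠ c i →
    al i * |x - c i| ^ (s i - 1) < deriv F x ∧
      deriv F x < be i * |x - c i| ^ (s i - 1)
  negSchwarzian : ∀ i, ∀ x ∈ W i, x ≠ c i → schwarzianDeriv F x < 0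
  /-- bound for the variation of `log DF` off the critical neighborhoods -/
  v : ℝ
  v_pos : 0 < v
  logDF_var : eVariationOn (fun x => Real.log (deriv F x))
      (Set.Icc 0 1 \ ⋃ (i) (k : ℤ), (fun y => y + (k : ℝ)) '' W i) ≤ ENNReal.ofReal v

/-- The circle map with lift `F` has rotation number `ρ`. -/
def HasRotationNumber (F : ℝ → ℝ) (ρ : ℝ) : Prop :=
  Tendsto (fun n : ℕ => F^[n] 0 / n) atTop (nhds ρ)

/-- The Gauss map `x ↦ {1/x}`. -/
def gaussMap (x : ℝ) : ℝ := Int.fract x⁻¹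

/-- Partial quotients `a_n` of the continued fraction expansion of `ρ ∈ (0,1)`. -/
def cfDigit (ρ : ℝ) (n : ℕ) : ℕ := (⌊(gaussMap^[n] ρ)⁻¹⌋).toNat

/-- Return times: the denominators `q_n` of the convergents of `ρ`,
`q_0 = 1`, `q_1 = a_0`, `q_{n+1} = a_n q_n + q_{n-1}`. -/
def qDen (ρ : ℝ) : ℕ → ℕ
  | 0 => 1
  | 1 => cfDigit ρ 0
  | n + 2 => cfDigit ρ (n + 1) * qDen ρ (n + 1) + qDen ρ n

/-- Numerators `p_n` of the convergents of `ρ`: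
`p_0 = 0`, `p_1 = 1`, `p_{n+1} = a_n p_n + p_{n-1}`. -/
def pNum (ρ : ℝ) : ℕ → ℕ
  | 0 => 0
  | 1 => 1
  | n + 2 => cfDigit ρ (n + 1) * pNum ρ (n + 1) + pNum ρ n

/-- The lift of the atom `I_ℓ^j(x) = f^j(I_ℓ(x))`, where `I_ℓ(x)` is the interval with
endpoints `x` and `f^{q_ℓ}(x)`; the lift of `f^{q_ℓ}(x)` adjacent to `x` is
`F^[q_ℓ] x - p_ℓ`. -/
def atomSet (F : ℝ → ℝ) (ρ x : ℝ) (ℓ j : ℕ) : Set ℝ :=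
  Set.uIcc (F^[j] x) (F^[j + qDen ρ ℓ] x - (pNum ρ ℓ : ℝ))

/-- The length of the atom `I_ℓ^j(x)`. -/
def atomLen (F : ℝ → ℝ) (ρ x : ℝ) (ℓ j : ℕ) : ℝ :=
  |F^[j + qDen ρ ℓ] x - (pNum ρ ℓ : ℝ) - F^[j] x|

/-- The two endpoints (as lifts) of the atom `I_ℓ^j(x)`. -/
def atomEnds (F : ℝ → ℝ) (ρ x : ℝ) (ℓ j : ℕ) : Set ℝ :=
  {F^[j] x, F^[j + qDen ρ ℓ] x - (pNum ρ ℓ : ℝ)}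

/-- `(ℓ, j)` indexes an atom of the `n`-th dynamical partition
`P_n(x) = {I_n^i(x) : i < q_{n+1}} ∪ {I_{n+1}^j(x) : j < q_n}`. -/
def IsAtomIdx (ρ : ℝ) (n ℓ j : ℕ) : Prop :=
  (ℓ = n ∧ j < qDen ρ (n + 1)) ∨ (ℓ = n + 1 ∧ j < qDen ρ n)

/-- Two distinct atoms are adjacent when they share an endpoint on the circle,
i.e. when some endpoints of their lifts differ by an integer. -/
def AdjacentAtoms (F : ℝ → ℝ) (ρ x : ℝ) (ℓ₁ j₁ ℓ₂ j₂ : ℕ) : Prop :=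
  (ℓ₁, j₁) ≠ (ℓ₂, j₂) ∧
    ∃ u ∈ atomEnds F ρ x ℓ₁ j₁, ∃ w ∈ atomEnds F ρ x ℓ₂ j₂, ∃ k : ℤ, w = u + (k : ℝ)

/-- `k` is a *critical time* at level `n`: `k < a_{n+1}` and the atom
`Δ_k = f^{q_n + k q_{n+1}}(I_{n+1}(c₀))` contains a critical point of `f^{q_{n+1}}`. -/
def CritTime (f : MCM) (ρ : ℝ) (i₀ : Fin f.N) (n k : ℕ) : Prop :=
  k < cfDigit ρ (n + 1) ∧
    ∃ x ∈ atomSet f.F ρ (f.c i₀) (n + 1) (qDen ρ n + k * qDen ρ (n + 1)),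
      deriv (f.F^[qDen ρ (n + 1)]) x = 0

/-- `(i, j)` bounds a bridge: `i` is a critical time (or the conventional time `k₀ = 0`),
there is no critical time strictly between `i` and `j`, and `j` is either the next
critical time or the final index `a_{n+1}`. The corresponding bridge is
`G = ⋃_{k=i+1}^{j-1} Δ_k`. -/
def IsBridgePair (f : MCM) (ρ : ℝ) (i₀ : Fin f.N) (n i j : ℕ) : Prop :=
  (CritTime f ρ i₀ n i ∨ i = 0) ∧ i < j ∧
    (∀ k, i < k → k < j → ¬CritTime f ρ i₀ n k) ∧
    (CritTime f ρ i₀ n j ∨ j = cfDigit ρ (n + 1))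

/-- The length of the union `⋃_{k=lo}^{hi-1} Δ_k` of consecutive atoms
`Δ_k = f^{q_n + k q_{n+1}}(I_{n+1}(c₀))`. -/
def bridgeLen (f : MCM) (ρ : ℝ) (i₀ : Fin f.N) (n lo hi : ℕ) : ℝ :=
  ∑ k ∈ Finset.Ico lo hi, atomLen f.F ρ (f.c i₀) (n + 1) (qDen ρ n + k * qDen ρ (n + 1))

/-- Endpoint pairs (on lifts) of the atoms of the auxiliary partition `P*_n(c₀)`:
images `f^{jj}(Δ_{k_i})` of the critical spots, images `f^{jj}(G_i)` of the bridges
(for `0 ≤ jj ≤ q_{n+1} - 1`), the intervals `f^{jj}(I_{n+2}(c₀))`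
(`0 ≤ jj ≤ q_{n+1} - 1`), and the short atoms `f^ℓ(I_{n+1}(c₀))` (`0 ≤ ℓ ≤ q_n - 1`). -/
def PStarAtomEnds (f : MCM) (ρ : ℝ) (i₀ : Fin f.N) (n : ℕ) (e : ℝ × ℝ) : Prop :=
  (∃ i jj : ℕ, (CritTime f ρ i₀ n i ∨ i = 0) ∧ jj < qDen ρ (n + 1) ∧
      e = (f.F^[jj + qDen ρ n + i * qDen ρ (n + 1)] (f.c i₀),
           f.F^[jj + qDen ρ n + (i + 1) * qDen ρ (n + 1)] (f.c i₀) -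
             (pNum ρ (n + 1) : ℝ))) ∨
  (∃ i j jj : ℕ, IsBridgePair f ρ i₀ n i j ∧ i + 1 < j ∧ jj < qDen ρ (n + 1) ∧
      e = (f.F^[jj + qDen ρ n + (i + 1) * qDen ρ (n + 1)] (f.c i₀),
           f.F^[jj + qDen ρ n + j * qDen ρ (n + 1)] (f.c i₀) -
             (((j - 1 - i) * pNum ρ (n + 1) : ℕ) : ℝ))) ∨
  (∃ jj : ℕ, jj < qDen ρ (n + 1) ∧
      e = (f.F^[jj] (f.c i₀), f.F^[jj + qDen ρ (n + 2)] (f.c i₀) - (pNum ρ (n + 2) : ℝ))) ∨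
  (∃ l : ℕ, l < qDen ρ n ∧
      e = (f.F^[l] (f.c i₀), f.F^[l + qDen ρ (n + 1)] (f.c i₀) - (pNum ρ (n + 1) : ℝ)))

/-!
One step of `f` does not increase a cross-ratio where the Schwarzian derivative is negative, and
otherwise increases it by at most a factor governed by the length of the quadruple and the number of
critical points it covers. Under the first `q_{n+1}` iterates the images of an interval spanned by
closest returns have bounded multiplicity, so the total loss is bounded independently of `n`. An
orbit of a closest return map passes the place where that map moves points least, and there the
cross-ratio of four consecutive orbit points is bounded below; going back along the orbit,
consecutive steps are comparable everywhere. At a critical point the power law with exponent `s > 1`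
then forces the closest returns of orders `n` and `n + 1` to be comparable, and bounded distortion
carries this along the orbit of the critical point. Every atom of `P*_n(c₀)` is thus comparable to
the `n`-th closest return at each of its endpoints, and atoms with a common endpoint are comparable
to the same quantity.
-/

/-! ### Continued fractions -/

/-- The signed distance `θ_n = q_n ρ - p_n` by which the `n`-th closest return moves a point of the
rotation by `ρ`. -/
def returnAngle (ρ : ℝ) (n : ℕ) : ℝ := qDen ρ n * ρ - pNum ρ n

theorem returnAngle_add_two (ρ : ℝ) (n : ℕ) :
    returnAngle ρ (n + 2) = cfDigit ρ (n + 1) * returnAngle ρ (n + 1) + returnAngle ρ n := by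
  simp only [returnAngle, qDen, pNum]
  push_cast
  ring

theorem qDen_mul_pNum_sub (ρ : ℝ) (n : ℕ) :
    (qDen ρ n : ℤ) * pNum ρ (n + 1) - qDen ρ (n + 1) * pNum ρ n = (-1) ^ n := by
  induction n with
  | zero => simp [qDen, pNum]
  | succ n ih =>
    simp only [qDen, pNum] at ih ⊢
    push_cast
    rw [pow_succ, ← ih]
    ring

section ContinuedFraction

variable {ρ : ℝ} (hirr : Irrational ρ) (hmem : ρ ∈ Ioo (0 : ℝ) 1)

include hirr

theorem irrational_gaussMap_iterate (n : ℕ) : Irrational (gaussMap^[n] ρ) := by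
  induction n with
  | zero => exact hirr
  | succ n ih =>
    rw [Function.iterate_succ_apply']
    exact (irrational_inv_iff.mpr ih).sub_intCast _

include hmem

theorem gaussMap_iterate_mem_Ioo : ∀ n : ℕ, gaussMap^[n] ρ ∈ Ioo (0 : ℝ) 1
  | 0 => hmem
  | n + 1 => by
    have hne := (irrational_gaussMap_iterate hirr (n + 1)).ne_zero
    rw [Function.iterate_succ_apply'] at hne ⊢
    exact ⟨(Int.fract_nonneg _).lt_of_ne' hne, Int.fract_lt_one _⟩

theorem one_le_floor_inv_gaussMap_iterate (n : ℕ) : 1 ≤ ⌊(gaussMap^[n] ρ)⁻¹⌋ := by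
  obtain ⟨hpos, hlt⟩ := gaussMap_iterate_mem_Ioo hirr hmem n
  exact Int.le_floor.mpr (by exact_mod_cast (one_le_inv₀ hpos).mpr hlt.le)

theorem one_le_cfDigit (n : ℕ) : 1 ≤ cfDigit ρ n := by
  have hfloor := one_le_floor_inv_gaussMap_iterate hirr hmem n
  simp only [cfDigit]
  lia

theorem inv_gaussMap_iterate (n : ℕ) :
    (gaussMap^[n] ρ)⁻¹ = cfDigit ρ n + gaussMap^[n + 1] ρ := by
  have hfloor := one_le_floor_inv_gaussMap_iterate hirr hmem n
  have hcast : (cfDigit ρ n : ℝ) = (⌊(gaussMap^[n] ρ)⁻¹⌋ : ℝ) := by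
    exact_mod_cast Int.toNat_of_nonneg (by lia : 0 ≤ ⌊(gaussMap^[n] ρ)⁻¹⌋)
  rw [hcast, Function.iterate_succ_apply', gaussMap, Int.floor_add_fract]

theorem returnAngle_succ (n : ℕ) :
    returnAngle ρ (n + 1) = -gaussMap^[n + 1] ρ * returnAngle ρ n := by
  induction n with
  | zero =>
    have hdigit : gaussMap^[0 + 1] ρ = ρ⁻¹ - cfDigit ρ 0 :=
      eq_sub_of_add_eq' (inv_gaussMap_iterate hirr hmem 0).symm
    have hρ : ρ ≠ 0 := hmem.1.ne'
    simp only [hdigit, returnAngle, qDen, pNum]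
    push_cast
    field_simp
    ring
  | succ n ih =>
    have hdigit : gaussMap^[n + 1 + 1] ρ = (gaussMap^[n + 1] ρ)⁻¹ - cfDigit ρ (n + 1) :=
      eq_sub_of_add_eq' (inv_gaussMap_iterate hirr hmem (n + 1)).symm
    have hne := (gaussMap_iterate_mem_Ioo hirr hmem (n + 1)).1.ne'
    rw [returnAngle_add_two, hdigit, ih]
    field_simp
    ring

theorem neg_one_pow_mul_returnAngle_mem_Ioo (n : ℕ) :
    (-1) ^ n * returnAngle ρ n ∈ Ioo (0 : ℝ) 1 := by
  induction n with
  | zero => simpa [returnAngle, qDen, pNum] using hmem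
  | succ n ih =>
    obtain ⟨hpos, hlt⟩ := gaussMap_iterate_mem_Ioo hirr hmem (n + 1)
    have hsucc : (-1) ^ (n + 1) * returnAngle ρ (n + 1)
        = gaussMap^[n + 1] ρ * ((-1) ^ n * returnAngle ρ n) := by
      rw [returnAngle_succ hirr hmem, pow_succ]
      ring
    rw [hsucc]
    exact ⟨mul_pos hpos ih.1, mul_lt_one_of_nonneg_of_lt_one_left hpos.le hlt ih.2.le⟩

theorem neg_one_pow_mul_returnAngle_add_pos (n : ℕ) :
    0 < (-1) ^ n * (returnAngle ρ n + returnAngle ρ (n + 1)) := by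
  have hfactor : (-1) ^ n * (returnAngle ρ n + returnAngle ρ (n + 1))
      = (1 - gaussMap^[n + 1] ρ) * ((-1) ^ n * returnAngle ρ n) := by
    rw [returnAngle_succ hirr hmem]
    ring
  rw [hfactor]
  exact mul_pos (sub_pos.mpr (gaussMap_iterate_mem_Ioo hirr hmem (n + 1)).2)
    (neg_one_pow_mul_returnAngle_mem_Ioo hirr hmem n).1

theorem returnAngle_mul_succ_neg (n : ℕ) : returnAngle ρ n * returnAngle ρ (n + 1) < 0 := by
  have hsq : 0 < returnAngle ρ n ^ 2 := by
    refine sq_pos_of_ne_zero fun hzero => ?_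
    simpa [hzero] using (neg_one_pow_mul_returnAngle_mem_Ioo hirr hmem n).1
  rw [returnAngle_succ hirr hmem]
  nlinarith [mul_pos (gaussMap_iterate_mem_Ioo hirr hmem (n + 1)).1 hsq]

theorem abs_returnAngle (n : ℕ) : |returnAngle ρ n| = (-1) ^ n * returnAngle ρ n := by
  rw [← abs_of_pos (neg_one_pow_mul_returnAngle_mem_Ioo hirr hmem n).1, abs_mul, abs_neg_one_pow,
    one_mul]

theorem qDen_pos : ∀ n : ℕ, 0 < qDen ρ n
  | 0 => one_pos
  | 1 => one_le_cfDigit hirr hmem 0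
  | n + 2 => Nat.add_pos_right _ (qDen_pos n)

theorem qDen_le_succ : ∀ n : ℕ, qDen ρ n ≤ qDen ρ (n + 1)
  | 0 => one_le_cfDigit hirr hmem 0
  | n + 1 => (Nat.le_mul_of_pos_left _ (one_le_cfDigit hirr hmem (n + 1))).trans
      (Nat.le_add_right _ _)

/-- `(k, -p)` is an integral combination `u (q_n, p_n) + v (q_{n+1}, p_{n+1})`; since
`0 < k < q_{n+1}` the coefficients have opposite signs and `u ≠ 0`, so that `u θ_n` and
`v θ_{n+1}` do not cancel. -/
theorem abs_returnAngle_le_of_lt_qDen {n k : ℕ} (hk : 0 < k) (hkq : k < qDen ρ (n + 1)) (p : ℤ) :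
    |returnAngle ρ n| ≤ |k * ρ + p| := by
  obtain ⟨u, v, hu, hv⟩ : ∃ u v : ℤ, u * qDen ρ n + v * qDen ρ (n + 1) = k ∧
      u * pNum ρ n + v * pNum ρ (n + 1) = -p := by
    have hdet := qDen_mul_pNum_sub ρ n
    have hsq : ((-1 : ℤ) ^ n) * (-1) ^ n = 1 := by rw [← mul_pow]; simp
    refine ⟨(-1) ^ n * (k * pNum ρ (n + 1) + p * qDen ρ (n + 1)),
      -(-1) ^ n * (k * pNum ρ n + p * qDen ρ n), ?_, ?_⟩
    · linear_combination ((-1) ^ n * k) * hdet + (k : ℤ) * hsq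
    · linear_combination (-(-1) ^ n * p) * hdet - p * hsq
  have hq : (0 : ℤ) < qDen ρ n := by exact_mod_cast qDen_pos hirr hmem n
  have hq' : (0 : ℤ) < qDen ρ (n + 1) := by exact_mod_cast qDen_pos hirr hmem (n + 1)
  have hk0 : (0 : ℤ) < k := by exact_mod_cast hk
  have hkq' : (k : ℤ) < qDen ρ (n + 1) := by exact_mod_cast hkq
  have hu_sq : 1 ≤ u ^ 2 := by
    refine (one_le_sq_iff_one_le_abs u).mpr (Int.one_le_abs ?_)
    rintro rfl
    have hv_pos : 0 < v := by nlinarith [hk0, hq']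
    nlinarith [hkq', hv_pos]
  have huv : u * v ≤ 0 := by
    by_contra! huv
    rcases pos_and_pos_or_neg_and_neg_of_mul_pos huv with ⟨hu0, hv0⟩ | ⟨hu0, hv0⟩ <;>
      nlinarith [hk0, hkq', hq, hq']
  have hcomb : (k : ℝ) * ρ + p = u * returnAngle ρ n + v * returnAngle ρ (n + 1) := by
    have hu' : (u * qDen ρ n + v * qDen ρ (n + 1) : ℝ) = k := by exact_mod_cast hu
    have hv' : (u * pNum ρ n + v * pNum ρ (n + 1) : ℝ) = -p := by exact_mod_cast hv
    simp only [returnAngle]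
    linear_combination (-ρ) * hu' + hv'
  have hu_sq' : (1 : ℝ) ≤ (u : ℝ) ^ 2 := by exact_mod_cast hu_sq
  have huv' : (u * v : ℝ) ≤ 0 := by exact_mod_cast huv
  rw [hcomb, ← sq_le_sq]
  nlinarith [mul_nonneg (sub_nonneg.mpr hu_sq') (sq_nonneg (returnAngle ρ n)),
    mul_nonneg_of_nonpos_of_nonpos huv' (returnAngle_mul_succ_neg hirr hmem n).le,
    sq_nonneg (v * returnAngle ρ (n + 1))]

end ContinuedFraction

/-! ### Closest return maps of a circle lift -/

theorem lt_of_commute_of_translationNumber_lt {f g : CircleDeg1Lift} (hcomm : Commute f g)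
    (hlt : f.translationNumber < g.translationNumber) (x : ℝ) : f x < g x := by
  by_contra! hle
  refine hlt.not_ge (le_of_tendsto_of_tendsto' (g.tendsto_translationNumber x)
    (f.tendsto_translationNumber x) fun n => ?_)
  have hiter := Function.Commute.iterate_le_of_map_le
    (CircleDeg1Lift.commute_iff_commute.mp hcomm.symm) g.monotone f.monotone hle n
  simp only [CircleDeg1Lift.coe_pow]
  gcongr

section ReturnMap

/-- The lift `x ↦ g^q x - p` of the `q`-th iterate of the circle map with lift `g`. -/
def returnMap (g : CircleDeg1Lift) (q : ℕ) (p : ℤ) : CircleDeg1Lift :=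
  (CircleDeg1Lift.translate (Multiplicative.ofAdd (-(p : ℝ))) : CircleDeg1Lift) * g ^ q

variable {g : CircleDeg1Lift} (q q' : ℕ) (p p' : ℤ) (x : ℝ)

theorem returnMap_apply : returnMap g q p x = (g ^ q) x - p := by
  simp [returnMap, neg_add_eq_sub]

theorem returnMap_mul : returnMap g q p * returnMap g q' p' = returnMap g (q + q') (p + p') := by
  ext x
  simp only [CircleDeg1Lift.mul_apply, returnMap_apply, CircleDeg1Lift.map_sub_int, pow_add,
    Int.cast_add]
  ring

theorem returnMap_returnMap :
    returnMap g q p (returnMap g q' p' x) = returnMap g (q + q') (p + p') x := by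
  rw [← returnMap_mul, CircleDeg1Lift.mul_apply]

theorem commute_returnMap : Commute (returnMap g q p) (returnMap g q' p') := by
  rw [commute_iff_eq, returnMap_mul, returnMap_mul, add_comm q, add_comm p]

theorem returnMap_comm :
    returnMap g q p (returnMap g q' p' x) = returnMap g q' p' (returnMap g q p x) :=
  DFunLike.congr_fun (commute_returnMap q q' p p').eq x

theorem pow_apply_returnMap (k : ℕ) :
    (g ^ k) (returnMap g q p x) = returnMap g q p ((g ^ k) x) := by
  simpa [returnMap_apply] using returnMap_comm k q 0 p x

theorem strictMono_pow (hg : StrictMono g) : StrictMono (g ^ q : CircleDeg1Lift) := by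
  rw [CircleDeg1Lift.coe_pow]
  exact hg.iterate q

theorem strictMono_returnMap (hg : StrictMono g) : StrictMono (returnMap g q p) := by
  intro x y hxy
  simpa [returnMap_apply] using strictMono_pow q hg hxy

theorem continuous_returnMap (hg : Continuous g) : Continuous (returnMap g q p) := by
  simp only [funext (returnMap_apply q p), CircleDeg1Lift.coe_pow]
  fun_prop

theorem translationNumber_returnMap :
    (returnMap g q p).translationNumber = q * g.translationNumber - p := by
  have hcomm : Commute
      (CircleDeg1Lift.translate (Multiplicative.ofAdd (-(p : ℝ))) : CircleDeg1Lift) (g ^ q) := by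
    rw [CircleDeg1Lift.commute_iff_commute]
    intro x
    simp [neg_add_eq_sub]
  rw [returnMap, CircleDeg1Lift.translationNumber_mul_of_commute hcomm,
    CircleDeg1Lift.translationNumber_translate, CircleDeg1Lift.translationNumber_pow]
  ring

variable {q q' p p'}

theorem returnMap_lt_returnMap
    (hlt : q * g.translationNumber - p < q' * g.translationNumber - p') :
    returnMap g q p x < returnMap g q' p' x :=
  lt_of_commute_of_translationNumber_lt (commute_returnMap q q' p p')
    (by simpa only [translationNumber_returnMap] using hlt) x

end ReturnMap

/-! ### Cross-ratios -/

section CrossRatio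

/-- The cross-ratio `[a, b] [c, d] / ([a, c] [b, d])` of four points `a < b < c < d`. -/
def crossRatio (a b c d : ℝ) : ℝ := (b - a) * (d - c) / ((c - a) * (d - b))

variable {a b c d : ℝ}

theorem crossRatio_sub_const (a b c d t : ℝ) :
    crossRatio (a - t) (b - t) (c - t) (d - t) = crossRatio a b c d := by
  simp only [crossRatio, sub_sub_sub_cancel_right]

theorem crossRatio_neg_rev (a b c d : ℝ) :
    crossRatio (-d) (-c) (-b) (-a) = crossRatio a b c d := by
  simp only [crossRatio, neg_sub_neg]
  rw [mul_comm (d - c), mul_comm (d - b)]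

variable (hab : a < b) (hbc : b < c) (hcd : c < d)
include hab hbc hcd

theorem crossRatio_pos : 0 < crossRatio a b c d := by
  have := hab.trans hbc
  have := hbc.trans hcd
  exact div_pos (mul_pos (by linarith) (by linarith)) (mul_pos (by linarith) (by linarith))

theorem crossRatio_le_left : crossRatio a b c d ≤ (b - a) / (c - a) := by
  rw [crossRatio, mul_div_mul_comm]
  exact mul_le_of_le_one_right (div_nonneg (by linarith) (by linarith))
    ((div_le_one (by linarith)).mpr (by linarith))

theorem crossRatio_le_right : crossRatio a b c d ≤ (d - c) / (d - b) := by
  rw [← crossRatio_neg_rev]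
  convert crossRatio_le_left (neg_lt_neg hcd) (neg_lt_neg hbc) (neg_lt_neg hab) using 1
  ring

theorem mul_le_sub_of_le_crossRatio {η : ℝ} (hη : 0 ≤ η) (h : η ≤ crossRatio a b c d) :
    η * (c - b) ≤ b - a ∧ η * (c - b) ≤ d - c := by
  constructor
  · have hle := h.trans (crossRatio_le_left hab hbc hcd)
    rw [le_div_iff₀ (by linarith)] at hle
    nlinarith
  · have hle := h.trans (crossRatio_le_right hab hbc hcd)
    rw [le_div_iff₀ (by linarith)] at hle
    nlinarith

end CrossRatio

/-! ### Cross-ratio distortion along closest returns -/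

theorem sum_sub_le_of_pairwise_disjoint {ι : Type*} {Φ : ℝ → ℝ} (hΦ : Monotone Φ) (s : Finset ι)
    {a b : ι → ℝ} {A : ℝ} (hab : ∀ j ∈ s, a j < b j) (hA : ∀ j ∈ s, A ≤ a j)
    (hdisj : ∀ i ∈ s, ∀ j ∈ s, i ≠ j → b i ≤ a j ∨ b j ≤ a i) {B : ℝ} (hAB : A ≤ B)
    (hB : ∀ j ∈ s, b j ≤ B) : ∑ j ∈ s, (Φ (b j) - Φ (a j)) ≤ Φ B - Φ A := by
  classical
  induction s using Finset.induction_on_max_value a generalizing B with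
  | empty => simpa using hΦ hAB
  | insert i s hi hmax ih =>
    simp only [Finset.forall_mem_insert] at hab hA hB hdisj
    rw [Finset.sum_insert hi]
    have hleft : ∀ j ∈ s, b j ≤ a i := fun j hj =>
      (hdisj.1.2 j hj (ne_of_mem_of_not_mem hj hi).symm).resolve_left fun hij => by
        linarith [hmax j hj, hab.1]
    have hrest := ih hab.2 hA.2 (fun j hj => (hdisj.2 j hj).2) hA.1 hleft
    linarith [hΦ hB.1]

open scoped AddConstMap

/-- A gauge `Φ` with `Φ (x + 1) = Φ x + D` controls the cross-ratio distortion of the circle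
homeomorphism with lift `g`: the cross-ratio of four points in `[a, d]` grows at most by the factor
`exp (Φ d - Φ a)`. Only intervals covering the circle at most three times are considered. -/
structure HasDistortionGauge (g : CircleDeg1Lift) {D : ℝ} (Φ : ℝ →+c[1, D] ℝ) : Prop where
  continuous : Continuous g
  strictMono : StrictMono g
  monotone_gauge : Monotone Φ
  crossRatio_le : ∀ {a b c d : ℝ}, a < b → b < c → c < d → d ≤ a + 3 →
    crossRatio (g a) (g b) (g c) (g d) ≤ Real.exp (Φ d - Φ a) * crossRatio a b c d

/-- The order properties of two consecutive closest return maps `R` and `R'`, with times `q ≤ q'`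
and translations `p` and `p'`, when `R` moves points to the right and `R'` to the left: `R` moves
points farther than `R'`, and the first `q'` iterates of each `[x, R x]` are disjoint on the
circle. -/
structure IsRightReturnPair (g : CircleDeg1Lift) (q q' : ℕ) (p p' : ℤ) : Prop where
  pos : 0 < q
  le : q ≤ q'
  lt_map : ∀ x, x < returnMap g q p x
  map_le_add_one : ∀ x, returnMap g q p x ≤ x + 1
  map'_lt : ∀ x, returnMap g q' p' x < x
  lt_map_map' : ∀ x, x < returnMap g q p (returnMap g q' p' x)
  disjoint : ∀ k, 0 < k → k < q' → ∀ (m : ℤ) (x : ℝ),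
    returnMap g q p x ≤ returnMap g k m x ∨ returnMap g q p (returnMap g k m x) ≤ x

section Distortion

variable {g : CircleDeg1Lift} {D : ℝ} {Φ : ℝ →+c[1, D] ℝ} {q q' : ℕ} {p p' : ℤ}

theorem HasDistortionGauge.iterate_crossRatio_le (hΦ : HasDistortionGauge g Φ) {a b c d : ℝ}
    (hab : a < b) (hbc : b < c) (hcd : c < d) (hda : d ≤ a + 3) (j : ℕ) :
    crossRatio ((g ^ j) a) ((g ^ j) b) ((g ^ j) c) ((g ^ j) d) ≤
      Real.exp (∑ i ∈ Finset.range j, (Φ ((g ^ i) d) - Φ ((g ^ i) a))) * crossRatio a b c d := by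
  induction j with
  | zero => simp
  | succ j ih =>
    have hmono := strictMono_pow j hΦ.strictMono
    have hda' : (g ^ j) d ≤ (g ^ j) a + 3 :=
      (hmono.monotone hda).trans_eq (by exact_mod_cast (g ^ j).map_add_nat a 3)
    simp only [pow_succ', CircleDeg1Lift.mul_apply]
    refine (hΦ.crossRatio_le (hmono hab) (hmono hbc) (hmono hcd) hda').trans ?_
    rw [Finset.sum_range_succ, add_comm, Real.exp_add, mul_assoc]
    gcongr

namespace IsRightReturnPair

variable (hpair : IsRightReturnPair g q q' p p')
include hpair

theorem orbit_disjoint (m : ℕ → ℤ) (x : ℝ) {i j : ℕ} (hi : i < q') (hj : j < q') (hij : i ≠ j) :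
    returnMap g q p (returnMap g i (m i) x) ≤ returnMap g j (m j) x ∨
      returnMap g q p (returnMap g j (m j) x) ≤ returnMap g i (m i) x := by
  wlog hlt : i < j generalizing i j
  · exact (this hj hi hij.symm (by lia)).symm
  have hshift : returnMap g j (m j) x =
      returnMap g (j - i) (m j - m i) (returnMap g i (m i) x) := by
    rw [returnMap_returnMap, Nat.sub_add_cancel hlt.le, sub_add_cancel]
  rw [hshift]
  exact hpair.disjoint (j - i) (by lia) (by lia) _ _

theorem sum_gauge_le (hΦ : Monotone Φ) (x : ℝ) :
    ∑ j ∈ Finset.range q', (Φ (returnMap g q p ((g ^ j) x)) - Φ ((g ^ j) x)) ≤ D := by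
  let m : ℕ → ℤ := fun j => ⌊(g ^ j) x - x⌋
  let y : ℕ → ℝ := fun j => returnMap g j (m j) x
  have hy : ∀ j, y j = (g ^ j) x - m j := fun j => returnMap_apply j (m j) x
  have hxy : ∀ j, x ≤ y j := fun j => by
    linarith [hy j, Int.floor_le ((g ^ j) x - x)]
  have hyx : ∀ j, y j < x + 1 := fun j => by
    linarith [hy j, Int.lt_floor_add_one ((g ^ j) x - x)]
  have hend : ∀ j ∈ Finset.range q', returnMap g q p (y j) ≤ x + 1 := by
    intro j hj
    rcases Nat.eq_zero_or_pos j with rfl | hj0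
    · simpa [hy, m] using hpair.map_le_add_one x
    · have hshift : returnMap g j (m j + 1) x = y j - (1 : ℤ) := by
        rw [hy, returnMap_apply]
        push_cast
        ring
      rcases hpair.disjoint j hj0 (Finset.mem_range.mp hj) (m j + 1) x with h | h
      · rw [hshift, Int.cast_one] at h
        linarith [hpair.lt_map x, hyx j]
      · rw [hshift, CircleDeg1Lift.map_sub_int, Int.cast_one] at h
        linarith
  have hsum := sum_sub_le_of_pairwise_disjoint hΦ (Finset.range q') (a := y)
    (b := fun j => returnMap g q p (y j)) (fun j _ => hpair.lt_map _) (fun j _ => hxy j)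
    (fun i hi j hj => hpair.orbit_disjoint m x (Finset.mem_range.mp hi) (Finset.mem_range.mp hj))
    (by linarith) hend
  rw [AddConstMapClass.map_add_one, add_sub_cancel_left] at hsum
  refine (Finset.sum_congr rfl fun j _ => ?_).trans_le hsum
  rw [hy, CircleDeg1Lift.map_sub_int, AddConstMapClass.map_sub_int', AddConstMapClass.map_sub_int',
    sub_sub_sub_cancel_right]

theorem sum_gauge_le_three_mul (hΦ : HasDistortionGauge g Φ) {a d : ℝ}
    (hd : d ≤ returnMap g q p (returnMap g q p (returnMap g q p a))) :
    ∑ i ∈ Finset.range q', (Φ ((g ^ i) d) - Φ ((g ^ i) a)) ≤ 3 * D := by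
  set R := returnMap g q p with hR
  calc ∑ i ∈ Finset.range q', (Φ ((g ^ i) d) - Φ ((g ^ i) a))
      ≤ ∑ i ∈ Finset.range q', ((Φ (R ((g ^ i) a)) - Φ ((g ^ i) a))
          + (Φ (R ((g ^ i) (R a))) - Φ ((g ^ i) (R a)))
          + (Φ (R ((g ^ i) (R (R a)))) - Φ ((g ^ i) (R (R a))))) := by
        refine Finset.sum_le_sum fun i _ => ?_
        have hmono := hΦ.monotone_gauge ((g ^ i).monotone hd)
        simp only [hR, pow_apply_returnMap] at hmono ⊢
        linarith
    _ ≤ 3 * D := by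
        rw [Finset.sum_add_distrib, Finset.sum_add_distrib]
        linarith [hpair.sum_gauge_le hΦ.monotone_gauge a,
          hpair.sum_gauge_le hΦ.monotone_gauge (R a),
          hpair.sum_gauge_le hΦ.monotone_gauge (R (R a))]

theorem pow_crossRatio_le (hΦ : HasDistortionGauge g Φ) {a b c d : ℝ} (hab : a < b) (hbc : b < c)
    (hcd : c < d) (hd : d ≤ returnMap g q p (returnMap g q p (returnMap g q p a))) {j : ℕ}
    (hj : j ≤ q') :
    crossRatio ((g ^ j) a) ((g ^ j) b) ((g ^ j) c) ((g ^ j) d) ≤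
      Real.exp (3 * D) * crossRatio a b c d := by
  have hd3 : d ≤ a + 3 := by
    have hR := hpair.map_le_add_one
    linarith [hR a, hR (returnMap g q p a), hR (returnMap g q p (returnMap g q p a))]
  refine (hΦ.iterate_crossRatio_le hab hbc hcd hd3 j).trans ?_
  have hCr := crossRatio_pos hab hbc hcd
  gcongr
  refine (Finset.sum_le_sum_of_subset_of_nonneg (Finset.range_mono hj) fun i _ _ => ?_).trans
    (hpair.sum_gauge_le_three_mul hΦ hd)
  exact sub_nonneg.mpr (hΦ.monotone_gauge ((g ^ i).monotone (by linarith)))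

theorem returnMap_crossRatio_le (hΦ : HasDistortionGauge g Φ) {a b c d : ℝ} (hab : a < b)
    (hbc : b < c) (hcd : c < d) (hd : d ≤ returnMap g q p (returnMap g q p (returnMap g q p a))) :
    crossRatio (returnMap g q p a) (returnMap g q p b) (returnMap g q p c) (returnMap g q p d) ≤
      Real.exp (3 * D) * crossRatio a b c d := by
  simpa only [returnMap_apply, crossRatio_sub_const] using
    hpair.pow_crossRatio_le hΦ hab hbc hcd hd hpair.le

/-- Among the first `q + q'` points of the orbit of `x`, take the lift closest to `y` from the left:
if `y` were beyond its image under `R`, then `R` or the inverse of `R'` would give a closer one. -/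
theorem exists_returnMap_le_lt (x y : ℝ) :
    ∃ (i : ℕ) (m : ℤ), i < q' + q ∧ returnMap g i m x ≤ y ∧
      y < returnMap g q p (returnMap g i m x) := by
  let m : ℕ → ℤ := fun i => -⌊y - (g ^ i) x⌋
  have hle : ∀ i, returnMap g i (m i) x ≤ y := fun i => by
    simp only [returnMap_apply, m]
    push_cast
    linarith [Int.floor_le (y - (g ^ i) x)]
  have hclosest : ∀ i k, returnMap g i k x ≤ y → returnMap g i k x ≤ returnMap g i (m i) x := by
    intro i k hk
    simp only [returnMap_apply, m] at hk ⊢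
    have hfloor : (-k : ℤ) ≤ ⌊y - (g ^ i) x⌋ := Int.le_floor.mpr (by push_cast; linarith)
    have hcast : (-k : ℝ) ≤ ⌊y - (g ^ i) x⌋ := by exact_mod_cast hfloor
    push_cast
    linarith
  obtain ⟨i, hi, hmax⟩ := Finset.exists_max_image (Finset.range (q' + q))
    (fun i => returnMap g i (m i) x) ⟨0, by have := hpair.pos; simp; lia⟩
  simp only [Finset.mem_range] at hi hmax
  refine ⟨i, m i, hi, hle i, ?_⟩
  by_contra! hbeyond
  rcases lt_or_ge i q' with hiq | hiq
  · rw [returnMap_returnMap] at hbeyond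
    have hlt := hpair.lt_map (returnMap g i (m i) x)
    rw [returnMap_returnMap] at hlt
    linarith [hclosest _ _ hbeyond, hmax (q + i) (by lia)]
  · set z := returnMap g (i - q') (m i - p') x with hz
    have hz' : returnMap g q' p' z = returnMap g i (m i) x := by
      rw [hz, returnMap_returnMap, Nat.add_sub_cancel' hiq, add_sub_cancel]
    have hlt := hpair.map'_lt z
    have hzy := hpair.lt_map_map' z
    rw [hz'] at hlt hzy
    linarith [hclosest (i - q') (m i - p') (by linarith), hmax (i - q') (by lia)]

end IsRightReturnPair

end Distortion

/-! ### Comparability of consecutive steps of a return map -/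

/-- The cross-ratio of four consecutive points of an orbit of `R`. -/
def orbitCrossRatio (R : ℝ → ℝ) (x : ℝ) : ℝ := crossRatio x (R x) (R (R x)) (R (R (R x)))

/-- Consecutive steps of every orbit of `R` have lengths within a factor `C` of each other. -/
def HasComparableSteps (R : ℝ → ℝ) (C : ℝ) : Prop :=
  ∀ x, |R (R x) - R x| ≤ C * |R x - x| ∧ |R x - x| ≤ C * |R (R x) - R x|

/-- The sum of four consecutive steps of which the last is the smallest of all, in units of that
smallest step, when the orbit cross-ratio grows at most by the factor `B` along orbits. -/
def spanConstant (B : ℝ) : ℝ := 1 + 4 * B + 16 * B ^ 3 + 64 * B ^ 6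

/-- The constant of comparability of consecutive steps of a return map that has cross-ratio
distortion at most `B`. -/
def stepConstant (B : ℝ) : ℝ := spanConstant B ^ 2 * B ^ 2

theorem spanConstant_pos {B : ℝ} (hB : 0 < B) : 0 < spanConstant B := by
  simp only [spanConstant]
  positivity

theorem stepConstant_pos {B : ℝ} (hB : 0 < B) : 0 < stepConstant B :=
  mul_pos (pow_pos (spanConstant_pos hB) 2) (pow_pos hB 2)

theorem one_div_mul_le_crossRatio {a b c d K L : ℝ} (hab : a < b) (hbc : b < c) (hcd : c < d)
    (hK : 0 < K) (hL : 0 < L) (hca : c - a ≤ K * (b - a)) (hdb : d - b ≤ L * (d - c)) :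
    1 / (K * L) ≤ crossRatio a b c d := by
  rw [crossRatio, div_le_div_iff₀ (by positivity) (mul_pos (by linarith) (by linarith)), one_mul]
  calc (c - a) * (d - b) ≤ (K * (b - a)) * (L * (d - c)) :=
        mul_le_mul hca hdb (by linarith) (mul_nonneg hK.le (by linarith))
    _ = (b - a) * (d - c) * (K * L) := by ring

theorem exists_forall_map_sub_le {f : CircleDeg1Lift} (hf : Continuous f) :
    ∃ z, ∀ x, f z - z ≤ f x - x := by
  obtain ⟨z, -, hz⟩ := isCompact_Icc.exists_isMinOn (Set.nonempty_Icc.mpr zero_le_one)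
    (hf.sub continuous_id).continuousOn (s := Icc (0 : ℝ) 1)
  exact ⟨z, f.forall_map_sub_of_Icc _ fun x hx => hz hx⟩

section Steps

variable {R : ℝ → ℝ} {B : ℝ} (hB : 0 < B) (hR : ∀ x, x < R x)
include hB hR

theorem sub_le_mul_of_le_orbitCrossRatio {x M : ℝ} (hM : 0 < M)
    (h : 1 / M ≤ orbitCrossRatio R (R x))
    (hgrow : orbitCrossRatio R (R x) ≤ B * orbitCrossRatio R x) :
    1 / (M * B) ≤ orbitCrossRatio R x ∧
      R (R x) - R x ≤ M * B * (R (R (R x)) - R (R x)) := by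
  have hx : 1 / (M * B) ≤ orbitCrossRatio R x := by
    rw [← div_div, div_le_iff₀' hB]
    exact h.trans hgrow
  refine ⟨hx, ?_⟩
  have hgap := (mul_le_sub_of_le_crossRatio (hR x) (hR _) (hR _) (by positivity) hx).2
  rwa [one_div, inv_mul_le_iff₀ (by positivity)] at hgap

theorem iterate_sub_le_spanConstant_mul
    (hgrow : ∀ x, orbitCrossRatio R (R x) ≤ B * orbitCrossRatio R x)
    {x : ℝ} (hmin : ∀ y, R^[5] x - R^[4] x ≤ R y - y) :
    R^[5] x - R^[1] x ≤ spanConstant B * (R^[5] x - R^[4] x) := by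
  simp only [Function.iterate_succ_apply', Function.iterate_zero_apply] at hmin ⊢
  have hquarter : 1 / 4 ≤ orbitCrossRatio R (R (R (R x))) := by
    have := one_div_mul_le_crossRatio (K := 2) (L := 2)
      (hR (R (R (R x)))) (hR _) (hR _) two_pos two_pos
      (by linarith [hmin (R (R (R x)))]) (by linarith [hmin (R (R (R (R (R x)))))])
    norm_num at this
    simpa [orbitCrossRatio] using this
  obtain ⟨hcr₂, hgap₂⟩ := sub_le_mul_of_le_orbitCrossRatio hB hR four_pos hquarter (hgrow _)
  obtain ⟨hcr₁, hgap₁⟩ := sub_le_mul_of_le_orbitCrossRatio hB hR (by positivity) hcr₂ (hgrow _)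
  obtain ⟨-, hgap₀⟩ := sub_le_mul_of_le_orbitCrossRatio hB hR (by positivity) hcr₁ (hgrow _)
  have hgap₁' := hgap₁.trans (mul_le_mul_of_nonneg_left hgap₂ (by positivity))
  have hgap₀' := hgap₀.trans (mul_le_mul_of_nonneg_left hgap₁' (by positivity))
  simp only [spanConstant]
  linarith

theorem one_div_le_orbitCrossRatio_of_mem_Ioc (hRmono : Monotone R)
    (hgrow : ∀ x, orbitCrossRatio R (R x) ≤ B * orbitCrossRatio R x)
    {x : ℝ} (hmin : ∀ y, R^[5] x - R^[4] x ≤ R y - y) {v : ℝ} (hv : v ∈ Ioc (R^[1] x) (R^[2] x)) :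
    1 / spanConstant B ^ 2 ≤ orbitCrossRatio R v := by
  have hspan := iterate_sub_le_spanConstant_mul hB hR hgrow hmin
  have hK := spanConstant_pos hB
  have hv₁ := hRmono hv.2
  have hv₂ := hRmono hv₁
  have hv₃ := hRmono hv₂
  simp only [← Function.iterate_succ_apply' R] at hv₁ hv₂ hv₃
  rw [sq]
  refine one_div_mul_le_crossRatio (hR _) (hR _) (hR _) hK hK ?_ ?_
  · linarith [hv.1, hR (R (R v)), mul_le_mul_of_nonneg_left (hmin v) hK.le]
  · linarith [hv.1, hR v, mul_le_mul_of_nonneg_left (hmin (R (R v))) hK.le]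

end Steps

namespace IsRightReturnPair

variable {g : CircleDeg1Lift} {D : ℝ} {Φ : ℝ →+c[1, D] ℝ} {q q' : ℕ} {p p' : ℤ}
  (hpair : IsRightReturnPair g q q' p p') (hΦ : HasDistortionGauge g Φ)
include hpair hΦ

theorem orbitCrossRatio_pow_le {j : ℕ} (hj : j ≤ q') (x : ℝ) :
    orbitCrossRatio (returnMap g q p) ((g ^ j) x) ≤
      Real.exp (3 * D) * orbitCrossRatio (returnMap g q p) x := by
  simpa only [orbitCrossRatio, pow_apply_returnMap] using
    hpair.pow_crossRatio_le hΦ (hpair.lt_map x) (hpair.lt_map _) (hpair.lt_map _) le_rfl hj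

theorem orbitCrossRatio_pow_le_sq {j : ℕ} (hj : j ≤ q' + q') (x : ℝ) :
    orbitCrossRatio (returnMap g q p) ((g ^ j) x) ≤
      Real.exp (3 * D) ^ 2 * orbitCrossRatio (returnMap g q p) x := by
  obtain ⟨i, k, hi, hk, rfl⟩ : ∃ i k, i ≤ q' ∧ k ≤ q' ∧ j = i + k :=
    ⟨j - min j q', min j q', by lia, by lia, by lia⟩
  rw [pow_add, CircleDeg1Lift.mul_apply, sq, mul_assoc]
  refine (hpair.orbitCrossRatio_pow_le hΦ hi _).trans ?_
  gcongr
  exact hpair.orbitCrossRatio_pow_le hΦ hk x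

/-- Near the smallest step of `R` the orbit cross-ratio is bounded below, and every orbit passes
there within `2 q'` iterates. -/
theorem one_div_stepConstant_le_orbitCrossRatio (x : ℝ) :
    1 / stepConstant (Real.exp (3 * D)) ≤ orbitCrossRatio (returnMap g q p) x := by
  set R := returnMap g q p
  set B := Real.exp (3 * D)
  have hB : 0 < B := Real.exp_pos _
  have hRmono : StrictMono R := strictMono_returnMap q p hΦ.strictMono
  have hRcont : Continuous R := continuous_returnMap q p hΦ.continuous
  obtain ⟨z, hz⟩ := exists_forall_map_sub_le hRcont
  obtain ⟨u, rfl⟩ := (R.continuous_iff_surjective.mp hRcont).iterate 4 z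
  rw [← Function.iterate_succ_apply' R] at hz
  have hgrow : ∀ y, orbitCrossRatio R (R y) ≤ B * orbitCrossRatio R y := fun y =>
    hpair.returnMap_crossRatio_le hΦ (hpair.lt_map y) (hpair.lt_map _) (hpair.lt_map _) le_rfl
  obtain ⟨i, m, hi, hle, hlt⟩ := hpair.exists_returnMap_le_lt x (R^[2] u)
  have hnear : 1 / spanConstant B ^ 2 ≤ orbitCrossRatio R (returnMap g i m x) :=
    one_div_le_orbitCrossRatio_of_mem_Ioc hB hpair.lt_map hRmono.monotone hgrow hz
      ⟨hRmono.lt_iff_lt.mp (by rwa [← Function.iterate_succ_apply' R]), hle⟩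
  have hshift : orbitCrossRatio R (returnMap g i m x) = orbitCrossRatio R ((g ^ i) x) := by
    simp only [orbitCrossRatio, returnMap_apply i, CircleDeg1Lift.map_sub_int, crossRatio_sub_const]
  rw [stepConstant, ← div_div, div_le_iff₀' (by positivity)]
  refine (hnear.trans_eq hshift).trans
    (hpair.orbitCrossRatio_pow_le_sq hΦ (hi.le.trans (by have := hpair.le; lia)) x)

theorem hasComparableSteps :
    HasComparableSteps (returnMap g q p) (stepConstant (Real.exp (3 * D))) := by
  set R := returnMap g q p
  have hlt : ∀ x, x < R x := hpair.lt_map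
  have hC : 0 < stepConstant (Real.exp (3 * D)) := stepConstant_pos (Real.exp_pos _)
  have hsteps : ∀ x, R (R x) - R x ≤ stepConstant (Real.exp (3 * D)) * (R x - x) ∧
      R (R x) - R x ≤ stepConstant (Real.exp (3 * D)) * (R (R (R x)) - R (R x)) := fun x => by
    simpa only [one_div, inv_mul_le_iff₀ hC] using mul_le_sub_of_le_crossRatio (hlt x) (hlt _)
      (hlt _) (by positivity) (hpair.one_div_stepConstant_le_orbitCrossRatio hΦ x)
  intro x
  rw [abs_of_pos (sub_pos.mpr (hlt x)), abs_of_pos (sub_pos.mpr (hlt _))]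
  obtain ⟨y, rfl⟩ :=
    R.continuous_iff_surjective.mp (continuous_returnMap q p hΦ.continuous) x
  exact ⟨(hsteps _).1, (hsteps y).2⟩

end IsRightReturnPair

/-! ### Comparison of consecutive return maps -/

/-- The increments of `F` on both sides of `c` are comparable to the power `t ^ s` of the distance
`t ≤ 1`, with constant `K`. -/
def HasPowerLaw (F : ℝ → ℝ) (c K s : ℝ) : Prop :=
  ∀ t, 0 < t → t ≤ 1 →
    (F c - F (c - t) ≤ K * t ^ s ∧ t ^ s ≤ K * (F c - F (c - t))) ∧
    (F (c + t) - F c ≤ K * t ^ s ∧ t ^ s ≤ K * (F (c + t) - F c))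

theorem HasPowerLaw.rpow_mul_crossRatio_le {F : ℝ → ℝ} {a b c d K s : ℝ}
    (h : HasPowerLaw F c K s) (hF : StrictMono F) (hK : 0 ≤ K) (hac : a < c) (hcb : c < b)
    (hbd : b < d) (hac_le : c - a ≤ 1) (hcb_le : b - c ≤ 1) :
    (b - c) ^ s * crossRatio (F a) (F c) (F b) (F d) ≤ K ^ 2 * (c - a) ^ s := by
  have hleft := (h (c - a) (by linarith) hac_le).1.1
  have hright := (h (b - c) (by linarith) hcb_le).2.2
  rw [sub_sub_cancel] at hleft
  rw [add_sub_cancel] at hright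
  have hFac := hF hac
  have hFcb := hF hcb
  have hcr := crossRatio_le_left hFac hFcb (hF hbd)
  rw [le_div_iff₀ (by linarith)] at hcr
  have hcr_pos := crossRatio_pos hFac hFcb (hF hbd)
  calc (b - c) ^ s * crossRatio (F a) (F c) (F b) (F d)
      ≤ (K * (F b - F a)) * crossRatio (F a) (F c) (F b) (F d) := by
        refine mul_le_mul_of_nonneg_right (hright.trans ?_) hcr_pos.le
        gcongr
    _ = K * (crossRatio (F a) (F c) (F b) (F d) * (F b - F a)) := by ring
    _ ≤ K * (K * (c - a) ^ s) := mul_le_mul_of_nonneg_left (hcr.trans hleft) hK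
    _ = K ^ 2 * (c - a) ^ s := by ring

theorem le_rpow_mul_of_mul_rpow_le {L M P s : ℝ} (hL : 0 < L) (hM : 0 < M) (hP : 0 ≤ P)
    (hs : 1 < s) (h : L * M ^ s ≤ P * M * L ^ s) : M ≤ P ^ (1 / (s - 1)) * L := by
  have hs' : 0 < s - 1 := sub_pos.mpr hs
  have hsplit : ∀ {x : ℝ}, 0 < x → x ^ s = x ^ (s - 1) * x := fun hx => by
    rw [← Real.rpow_add_one hx.ne', sub_add_cancel]
  rw [hsplit hL, hsplit hM] at h
  have hpow : M ^ (s - 1) ≤ P * L ^ (s - 1) :=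
    le_of_mul_le_mul_right (by linarith) (mul_pos hL hM)
  calc M ≤ (P * L ^ (s - 1)) ^ (s - 1)⁻¹ :=
        (Real.le_rpow_inv_iff_of_pos hM.le (by positivity) hs').mpr hpow
    _ = P ^ (1 / (s - 1)) * L := by
        rw [Real.mul_rpow hP (by positivity), Real.rpow_rpow_inv hL.le hs'.ne', one_div]

namespace IsRightReturnPair

variable {g : CircleDeg1Lift} {D C : ℝ} {Φ : ℝ →+c[1, D] ℝ} {q q' : ℕ} {p p' : ℤ}
  (hpair : IsRightReturnPair g q q' p p')
include hpair

theorem abs_returnMap_sub (x : ℝ) : |returnMap g q p x - x| = returnMap g q p x - x :=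
  abs_of_pos (sub_pos.mpr (hpair.lt_map x))

theorem abs_returnMap'_sub (x : ℝ) : |returnMap g q' p' x - x| = x - returnMap g q' p' x := by
  rw [abs_sub_comm]
  exact abs_of_pos (sub_pos.mpr (hpair.map'_lt x))

theorem sub_le_of_hasComparableSteps (hsteps : HasComparableSteps (returnMap g q p) C) (x : ℝ) :
    returnMap g q p (returnMap g q p x) - returnMap g q p x ≤ C * (returnMap g q p x - x) ∧
      returnMap g q p x - x ≤
        C * (returnMap g q p (returnMap g q p x) - returnMap g q p x) := by
  simpa only [hpair.abs_returnMap_sub] using hsteps x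

theorem sub_le_of_hasComparableSteps' (hsteps : HasComparableSteps (returnMap g q' p') C) (x : ℝ) :
    returnMap g q' p' x - returnMap g q' p' (returnMap g q' p' x) ≤
        C * (x - returnMap g q' p' x) ∧
      x - returnMap g q' p' x ≤
        C * (returnMap g q' p' x - returnMap g q' p' (returnMap g q' p' x)) := by
  simpa only [hpair.abs_returnMap'_sub] using hsteps x

theorem map_map_le (x : ℝ) :
    returnMap g q p (returnMap g q p x) ≤
      returnMap g q p (returnMap g q p (returnMap g q p (returnMap g q' p' x))) :=
  (returnMap g q p).monotone ((returnMap g q p).monotone (hpair.lt_map_map' x).le)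

theorem abs_sub_le_of_pow (hΦ : HasDistortionGauge g Φ) (hC : 0 ≤ C)
    (hsteps : HasComparableSteps (returnMap g q p) C) {K : ℝ} (hK : 0 ≤ K) {j : ℕ} (hj : j ≤ q')
    {w : ℝ} (h : |returnMap g q p ((g ^ j) w) - (g ^ j) w| ≤
      K * |returnMap g q' p' ((g ^ j) w) - (g ^ j) w|) :
    |returnMap g q p w - w| ≤
      (1 + K) * (1 + C) * Real.exp (3 * D) * |returnMap g q' p' w - w| := by
  set R := returnMap g q p
  set R' := returnMap g q' p'
  set y := (g ^ j) w with hy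
  rw [hpair.abs_returnMap_sub, hpair.abs_returnMap'_sub] at h ⊢
  have hgrow : crossRatio (R' y) y (R y) (R (R y)) ≤
      Real.exp (3 * D) * crossRatio (R' w) w (R w) (R (R w)) := by
    simpa only [pow_apply_returnMap] using hpair.pow_crossRatio_le hΦ (hpair.map'_lt w)
      (hpair.lt_map w) (hpair.lt_map _) (hpair.map_map_le w) hj
  have hlow : 1 / ((1 + K) * (1 + C)) ≤ crossRatio (R' y) y (R y) (R (R y)) :=
    one_div_mul_le_crossRatio (hpair.map'_lt y) (hpair.lt_map y) (hpair.lt_map _) (by positivity)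
      (by positivity) (by linarith)
      (by linarith [(hpair.sub_le_of_hasComparableSteps hsteps y).2])
  have hlow' : 1 / ((1 + K) * (1 + C) * Real.exp (3 * D)) ≤
      crossRatio (R' w) w (R w) (R (R w)) := by
    rw [← div_div, div_le_iff₀' (Real.exp_pos _)]
    exact hlow.trans hgrow
  have hgap := (mul_le_sub_of_le_crossRatio (hpair.map'_lt w) (hpair.lt_map w) (hpair.lt_map _)
    (by positivity) hlow').1
  rwa [one_div, inv_mul_le_iff₀ (by positivity)] at hgap

theorem sub_le_mul_crossRatio (hC : 0 < C) (hg : StrictMono g)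
    (hsteps : HasComparableSteps (returnMap g q p) C)
    (hsteps' : HasComparableSteps (returnMap g q' p') C) (x : ℝ) :
    x - returnMap g q' p' x ≤
      ((C * (1 + C) ^ 2 + 1) * C * (1 + C)) * (returnMap g q p x - x) *
        crossRatio (returnMap g q' p' (returnMap g q' p' x)) (returnMap g q' p' x)
          (returnMap g q p (returnMap g q' p' x))
          (returnMap g q p (returnMap g q p (returnMap g q' p' x))) := by
  set R := returnMap g q p
  set R' := returnMap g q' p'
  have hR : StrictMono R := strictMono_returnMap q p hg
  have hL : 0 < x - R' x := sub_pos.mpr (hpair.map'_lt x)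
  have hM : 0 < R x - x := sub_pos.mpr (hpair.lt_map x)
  have hx := (hpair.sub_le_of_hasComparableSteps hsteps x).1
  have hR'x := (hpair.sub_le_of_hasComparableSteps hsteps (R' x)).2
  obtain ⟨hx'₁, hx'₂⟩ := hpair.sub_le_of_hasComparableSteps' hsteps' x
  have hRR' : R (R' x) < R x := hR (hpair.map'_lt x)
  have hstep : R (R (R' x)) - R (R' x) ≤ (1 + C) * (R x - x) := by
    linarith [hR hRR', hpair.lt_map_map' x]
  have hLM : x - R' x ≤ C * (1 + C) * (R x - x) := by
    linarith [mul_le_mul_of_nonneg_left hstep hC.le, hpair.lt_map_map' x]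
  have hspan : R (R' x) - R' (R' x) ≤ (C * (1 + C) ^ 2 + 1) * (R x - x) := by
    linarith [mul_le_mul_of_nonneg_left hLM (by positivity : 0 ≤ 1 + C)]
  have hcr := one_div_mul_le_crossRatio (hpair.map'_lt (R' x)) (hpair.lt_map (R' x))
    (hpair.lt_map (R (R' x)))
    (K := (C * (1 + C) ^ 2 + 1) * C * (R x - x) / (x - R' x)) (L := 1 + C) (by positivity)
    (by positivity) ?_ (by linarith)
  · rw [one_div, inv_le_iff_one_le_mul₀' (by positivity), div_mul_eq_mul_div, div_mul_eq_mul_div,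
      one_le_div hL] at hcr
    linarith
  · rw [div_mul_eq_mul_div, le_div_iff₀ hL]
    calc (R (R' x) - R' (R' x)) * (x - R' x)
        ≤ ((C * (1 + C) ^ 2 + 1) * (R x - x)) * (C * (R' x - R' (R' x))) := by gcongr
      _ = (C * (1 + C) ^ 2 + 1) * C * (R x - x) * (R' x - R' (R' x)) := by ring

theorem crossRatio_returnMap'_le (hΦ : HasDistortionGauge g Φ) (x : ℝ) :
    crossRatio (returnMap g q' p' (returnMap g q' p' x)) (returnMap g q' p' x)
        (returnMap g q p (returnMap g q' p' x))
        (returnMap g q p (returnMap g q p (returnMap g q' p' x))) ≤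
      Real.exp (3 * D) * crossRatio (g (returnMap g q' p' x)) (g x) (g (returnMap g q p x))
        (g (returnMap g q p (returnMap g q p x))) := by
  have hg : ∀ k m y, g (returnMap g k m y) = returnMap g k m (g y) := fun k m y => by
    simpa using pow_apply_returnMap k m y 1
  have hq' : q' - 1 + 1 = q' := Nat.sub_add_cancel (hpair.pos.trans_le hpair.le)
  have hpow : (g ^ (q' - 1)) (g x) = returnMap g q' p' x + p' := by
    rw [returnMap_apply, sub_add_cancel, ← CircleDeg1Lift.mul_apply, ← pow_succ, hq']
  have hgrow := hpair.pow_crossRatio_le hΦ (hpair.map'_lt (g x)) (hpair.lt_map (g x))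
    (hpair.lt_map _) (hpair.map_map_le (g x)) (Nat.sub_le q' 1)
  simp only [pow_apply_returnMap, hpow, CircleDeg1Lift.map_add_int] at hgrow
  simpa only [hg, add_sub_cancel_right, crossRatio_sub_const] using
    (crossRatio_sub_const _ _ _ _ (p' : ℝ)).trans_le hgrow

/-- At a critical point the cross-ratio after one step is of the order of the `s`-th power of the
ratio of the two returns, whereas after `q'` steps it is at least of the order of the ratio itself;
since `s > 1`, the ratio is bounded below. -/
theorem abs_sub_le_of_hasPowerLaw (hΦ : HasDistortionGauge g Φ) (hC : 0 < C)
    (hsteps : HasComparableSteps (returnMap g q p) C)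
    (hsteps' : HasComparableSteps (returnMap g q' p') C) {c K s : ℝ} (hK : 0 ≤ K) (hs : 1 < s)
    (hpower : HasPowerLaw g c K s) :
    |returnMap g q p c - c| ≤
      ((C * (1 + C) ^ 2 + 1) * C * (1 + C) * Real.exp (3 * D) * K ^ 2) ^ (1 / (s - 1)) *
        |returnMap g q' p' c - c| := by
  set R := returnMap g q p
  set R' := returnMap g q' p'
  rw [hpair.abs_returnMap_sub, hpair.abs_returnMap'_sub]
  have hR'c := hpair.map'_lt c
  have hRc := hpair.lt_map c
  have hupper := hpower.rpow_mul_crossRatio_le hΦ.strictMono hK hR'c hRc (hpair.lt_map (R c))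
    (by linarith [hpair.lt_map_map' c, hpair.map_le_add_one (R' c)])
    (by linarith [hpair.map_le_add_one c])
  have hlower := hpair.sub_le_mul_crossRatio hC hΦ.strictMono hsteps hsteps' c
  have hgrow := hpair.crossRatio_returnMap'_le hΦ c
  refine le_rpow_mul_of_mul_rpow_le (sub_pos.mpr hR'c) (sub_pos.mpr hRc) (by positivity) hs ?_
  have : 0 < R c - c := sub_pos.mpr hRc
  set P := (C * (1 + C) ^ 2 + 1) * C * (1 + C)
  have : 0 < P := by positivity
  calc (c - R' c) * (R c - c) ^ s
      ≤ (P * (R c - c) * (Real.exp (3 * D) *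
          crossRatio (g (R' c)) (g c) (g (R c)) (g (R (R c))))) * (R c - c) ^ s := by
        gcongr
        exact hlower.trans (by gcongr)
    _ = P * (R c - c) * Real.exp (3 * D) *
          ((R c - c) ^ s * crossRatio (g (R' c)) (g c) (g (R c)) (g (R (R c)))) := by ring
    _ ≤ P * (R c - c) * Real.exp (3 * D) * (K ^ 2 * (c - R' c) ^ s) := by gcongr
    _ = P * Real.exp (3 * D) * K ^ 2 * (R c - c) * (c - R' c) ^ s := by ring

end IsRightReturnPair

section Reflection

variable {g : CircleDeg1Lift} {D C : ℝ} {Φ : ℝ →+c[1, D] ℝ} {q q' : ℕ} {p p' : ℤ}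

/-- The conjugate `x ↦ -g (-x)` of `g` by the reflection of the line, which exchanges left and
right. -/
def reflect (g : CircleDeg1Lift) : CircleDeg1Lift where
  toFun x := -g (-x)
  monotone' _ _ h := neg_le_neg (g.monotone (neg_le_neg h))
  map_add_one' x := by
    have h := g.map_add_one (-(x + 1))
    rw [neg_add, neg_add_cancel_right] at h
    rw [neg_add, h]
    ring

theorem reflect_apply (g : CircleDeg1Lift) (x : ℝ) : reflect g x = -g (-x) := rfl

theorem reflect_pow_apply (g : CircleDeg1Lift) (k : ℕ) (x : ℝ) :
    (reflect g ^ k) x = -(g ^ k) (-x) := by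
  induction k with
  | zero => simp
  | succ k ih => rw [pow_succ', CircleDeg1Lift.mul_apply, ih, reflect_apply, neg_neg, pow_succ',
      CircleDeg1Lift.mul_apply]

theorem returnMap_reflect (g : CircleDeg1Lift) (q : ℕ) (p : ℤ) (x : ℝ) :
    returnMap (reflect g) q (-p) x = -returnMap g q p (-x) := by
  rw [returnMap_apply, returnMap_apply, reflect_pow_apply]
  push_cast
  ring

/-- The gauge `x ↦ -Φ (-x)` for the reflected map. -/
def reflectGauge (Φ : ℝ →+c[1, D] ℝ) : ℝ →+c[1, D] ℝ where
  toFun x := -Φ (-x)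
  map_add_const' x := by
    rw [neg_add, ← sub_eq_add_neg, AddConstMapClass.map_sub_const, neg_sub', sub_neg_eq_add]

theorem HasDistortionGauge.reflect (hΦ : HasDistortionGauge g Φ) :
    HasDistortionGauge (reflect g) (reflectGauge Φ) where
  continuous := (hΦ.continuous.comp continuous_neg).neg
  strictMono _ _ h := neg_lt_neg (hΦ.strictMono (neg_lt_neg h))
  monotone_gauge _ _ h := neg_le_neg (hΦ.monotone_gauge (neg_le_neg h))
  crossRatio_le {a b c d} hab hbc hcd hda := by
    have h := hΦ.crossRatio_le (neg_lt_neg hcd) (neg_lt_neg hbc) (neg_lt_neg hab) (by linarith)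
    rw [crossRatio_neg_rev, ← crossRatio_neg_rev, ← neg_sub_neg (Φ (-d)) (Φ (-a))] at h
    exact h

theorem hasComparableSteps_reflect :
    HasComparableSteps (returnMap (reflect g) q (-p)) C ↔
      HasComparableSteps (returnMap g q p) C := by
  simp only [HasComparableSteps, returnMap_reflect, neg_neg]
  refine (Equiv.neg ℝ).forall_congr fun x => ?_
  simp only [Equiv.neg_apply, sub_neg_eq_add, neg_add_eq_sub, abs_sub_comm, add_comm x]

theorem HasPowerLaw.reflect {c K s : ℝ} (h : HasPowerLaw g c K s) :
    HasPowerLaw (_root_.reflect g) (-c) K s := by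
  intro t ht ht1
  have hneg_sub : -(-c - t) = c + t := by ring
  have hneg_add : -(-c + t) = c - t := by ring
  simpa only [reflect_apply, hneg_sub, hneg_add, neg_neg, neg_sub_neg] using (h t ht ht1).symm

end Reflection

/-- The return maps with times `q` and `q'` and translations `p` and `p'` form a pair of consecutive
closest return maps, moving points in opposite directions. -/
def IsReturnPair (g : CircleDeg1Lift) (q q' : ℕ) (p p' : ℤ) : Prop :=
  IsRightReturnPair g q q' p p' ∨ IsRightReturnPair (reflect g) q q' (-p) (-p')

namespace IsReturnPair

variable {g : CircleDeg1Lift} {D C : ℝ} {Φ : ℝ →+c[1, D] ℝ} {q q' : ℕ} {p p' : ℤ}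
  (hpair : IsReturnPair g q q' p p')
include hpair

theorem hasComparableSteps (hΦ : HasDistortionGauge g Φ) :
    HasComparableSteps (returnMap g q p) (stepConstant (Real.exp (3 * D))) := by
  rcases hpair with h | h
  · exact h.hasComparableSteps hΦ
  · exact hasComparableSteps_reflect.mp (h.hasComparableSteps hΦ.reflect)

theorem mem_uIcc (w : ℝ) :
    w ∈ uIcc (returnMap g q' p' w) (returnMap g q p (returnMap g q' p' w)) := by
  rw [Set.mem_uIcc]
  rcases hpair with h | h
  · exact Or.inl ⟨(h.map'_lt w).le, (h.lt_map_map' w).le⟩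
  · have hlt := h.map'_lt (-w)
    have hlt' := h.lt_map_map' (-w)
    simp only [returnMap_reflect, neg_neg] at hlt hlt'
    exact Or.inr ⟨(neg_lt_neg_iff.mp hlt').le, (neg_lt_neg_iff.mp hlt).le⟩

theorem abs_sub_le_of_pow (hΦ : HasDistortionGauge g Φ) (hC : 0 ≤ C)
    (hsteps : HasComparableSteps (returnMap g q p) C) {K : ℝ} (hK : 0 ≤ K) {j : ℕ} (hj : j ≤ q')
    {w : ℝ} (h : |returnMap g q p ((g ^ j) w) - (g ^ j) w| ≤
      K * |returnMap g q' p' ((g ^ j) w) - (g ^ j) w|) :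
    |returnMap g q p w - w| ≤
      (1 + K) * (1 + C) * Real.exp (3 * D) * |returnMap g q' p' w - w| := by
  rcases hpair with hright | hright
  · exact hright.abs_sub_le_of_pow hΦ hC hsteps hK hj h
  · have hreflect := hright.abs_sub_le_of_pow hΦ.reflect hC
      (hasComparableSteps_reflect.mpr hsteps) hK hj (w := -w)
    simp only [returnMap_reflect, reflect_pow_apply, neg_neg, neg_sub_neg,
      abs_sub_comm _ (returnMap _ _ _ _)] at hreflect
    exact hreflect h

theorem abs_sub_le_of_hasPowerLaw (hΦ : HasDistortionGauge g Φ) (hC : 0 < C)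
    (hsteps : HasComparableSteps (returnMap g q p) C)
    (hsteps' : HasComparableSteps (returnMap g q' p') C) {c K s : ℝ} (hK : 0 ≤ K) (hs : 1 < s)
    (hpower : HasPowerLaw g c K s) :
    |returnMap g q p c - c| ≤
      ((C * (1 + C) ^ 2 + 1) * C * (1 + C) * Real.exp (3 * D) * K ^ 2) ^ (1 / (s - 1)) *
        |returnMap g q' p' c - c| := by
  rcases hpair with hright | hright
  · exact hright.abs_sub_le_of_hasPowerLaw hΦ hC hsteps hsteps' hK hs hpower
  · have hreflect := hright.abs_sub_le_of_hasPowerLaw hΦ.reflect hC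
      (hasComparableSteps_reflect.mpr hsteps) (hasComparableSteps_reflect.mpr hsteps') hK hs
      hpower.reflect
    simpa only [returnMap_reflect, neg_neg, neg_sub_neg,
      abs_sub_comm _ (returnMap _ _ _ _)] using hreflect

end IsReturnPair

theorem HasComparableSteps.of_mem_uIcc {R : ℝ → ℝ} {C w z : ℝ} (h : HasComparableSteps R C)
    (hR : Monotone R) (hC : 0 ≤ C) (hz : z ∈ uIcc w (R w)) :
    |R z - z| ≤ (1 + C) ^ 2 * |R w - w| ∧ |R w - w| ≤ (1 + C) ^ 2 * |R z - z| := by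
  have hw₂ : |R (R w) - w| ≤ (1 + C) * |R w - w| := by
    linarith [abs_sub_le (R (R w)) (R w) w, (h w).1]
  have hz₂ : |R (R z) - z| ≤ (1 + C) * |R z - z| := by
    linarith [abs_sub_le (R (R z)) (R z) z, (h z).1]
  have hsub : |R z - z| ≤ |R (R w) - w| ∧ |R (R w) - R w| ≤ |R (R z) - z| := by
    rcases Set.mem_uIcc.mp hz with ⟨hwz, hzw⟩ | ⟨hzw, hwz⟩ <;>
      grind [hR hwz, hR hzw, hR (hR hwz), hR (hR hzw)]
  constructor
  · calc |R z - z| ≤ (1 + C) * |R w - w| := hsub.1.trans hw₂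
      _ ≤ (1 + C) ^ 2 * |R w - w| := by gcongr; exact le_self_pow₀ (by linarith) two_ne_zero
  · calc |R w - w| ≤ C * ((1 + C) * |R z - z|) := (h w).2.trans (by gcongr; exact hsub.2.trans hz₂)
      _ ≤ (1 + C) * ((1 + C) * |R z - z|) := by gcongr; linarith
      _ = (1 + C) ^ 2 * |R z - z| := by ring

/-! ### Negative Schwarzian derivative -/

section Schwarzian

variable {F : ℝ → ℝ}

/-- `1 / √F'` solves the linear equation `y'' = -(S F / 2) y`. -/
theorem convexOn_inv_sqrt_deriv_of_schwarzianDeriv_nonpos (hF : ContDiff ℝ 3 F) {s : Set ℝ}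
    (hs : Convex ℝ s) (hpos : ∀ x ∈ s, 0 < deriv F x) (hS : ∀ x ∈ s, schwarzianDeriv F x ≤ 0) :
    ConvexOn ℝ s fun t => (√(deriv F t))⁻¹ := by
  have hF₁ : ContDiff ℝ 2 (deriv F) := (contDiff_succ_iff_deriv (n := 2).mp hF).2.2
  have hF₂ : ContDiff ℝ 1 (deriv (deriv F)) := (contDiff_succ_iff_deriv (n := 1).mp hF₁).2.2
  set g : ℝ → ℝ := fun t => (√(deriv F t))⁻¹
  set u : ℝ → ℝ := fun t => deriv (deriv F) t / deriv F t
  have hg : ∀ t ∈ s, HasDerivAt g (-(1 / 2) * (u t * g t)) t := fun t ht => by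
    have h := ((hF₁.differentiable (by norm_num) t).hasDerivAt.sqrt (hpos t ht).ne').inv
      (Real.sqrt_pos.mpr (hpos t ht)).ne'
    refine h.congr_deriv ?_
    simp only [u, g]
    rw [Real.sq_sqrt (hpos t ht).le]
    field_simp
  have hu : ∀ t ∈ s, HasDerivAt u (deriv u t) t := fun t ht =>
    ((hF₂.differentiable (by norm_num) t).div (hF₁.differentiable (by norm_num) t)
      (hpos t ht).ne').hasDerivAt
  have hsub := interior_subset (s := s)
  refine convexOn_of_hasDerivWithinAt2_nonneg hs
    (fun t ht => (hg t ht).continuousAt.continuousWithinAt)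
    (fun t ht => (hg t (hsub ht)).hasDerivWithinAt)
    (fun t ht => (((hu t (hsub ht)).mul (hg t (hsub ht))).const_mul
      (-(1 / 2))).hasDerivWithinAt) fun t ht => ?_
  have hSt : deriv u t - 1 / 2 * u t ^ 2 ≤ 0 := hS t (hsub ht)
  have hgt : 0 ≤ g t := inv_nonneg.mpr (Real.sqrt_nonneg _)
  linear_combination (1 / 2 : ℝ) * mul_nonneg (neg_nonneg.mpr hSt) hgt

/-- The Möbius map with the same values of `1 / √F'` at `x` and `y` has the chord of `1 / √F'` as
its own `1 / √F'`; it increases more slowly than `F`. -/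
theorem sub_le_mul_sub_of_convexOn {g : ℝ → ℝ} {x y : ℝ} (hxy : x < y)
    (hF : ∀ t ∈ Icc x y, HasDerivAt F (g t ^ 2)⁻¹ t) (hg : ConvexOn ℝ (Icc x y) g)
    (hpos : ∀ t ∈ Icc x y, 0 < g t) : y - x ≤ g x * g y * (F y - F x) := by
  have hx : x ∈ Icc x y := left_mem_Icc.mpr hxy.le
  have hy : y ∈ Icc x y := right_mem_Icc.mpr hxy.le
  set σ := (g y - g x) / (y - x)
  set chord : ℝ → ℝ := fun t => g x + (t - x) * σ
  have hchord_y : chord y = g y := by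
    simp only [chord, σ, mul_div_cancel₀ _ (sub_pos.mpr hxy).ne', add_sub_cancel]
  have hle : ∀ t ∈ Icc x y, g t ≤ chord t := fun t ht => by
    rcases ht.1.eq_or_lt with rfl | hxt
    · simp [chord]
    · have h := hg.secant_mono hx ht hy hxt.ne' hxy.ne' ht.2
      rw [div_le_iff₀ (sub_pos.mpr hxt)] at h
      linear_combination h
  have hderiv : ∀ t ∈ Icc x y, HasDerivAt (fun t => F t - (t - x) / (g x * chord t))
      ((g t ^ 2)⁻¹ - (chord t ^ 2)⁻¹) t := fun t ht => by
    have hchord_pos := (hpos t ht).trans_le (hle t ht)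
    have hgx := hpos x hx
    have hchord : HasDerivAt chord (1 * σ) t :=
      (((hasDerivAt_id t).sub_const x).mul_const σ).const_add (g x)
    have hdiv := ((hasDerivAt_id t).sub_const x).div (hchord.const_mul (g x))
      (mul_pos hgx hchord_pos).ne'
    refine ((hF t ht).sub hdiv).congr_deriv ?_
    congr 1
    simp only [id_eq]
    field_simp
    simp only [chord]
    ring
  have hmono := monotoneOn_of_hasDerivWithinAt_nonneg (convex_Icc x y)
    (fun t ht => (hderiv t ht).continuousAt.continuousWithinAt)
    (fun t ht => (hderiv t (interior_subset ht)).hasDerivWithinAt) fun t ht => by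
      have hgt := hpos t (interior_subset ht)
      have := hle t (interior_subset ht)
      exact sub_nonneg.mpr (inv_anti₀ (by positivity) (by gcongr))
  have h := hmono hx hy hxy.le
  simp only [sub_self, zero_div, sub_zero, hchord_y] at h
  have hprod := mul_pos (hpos x hx) (hpos y hy)
  rw [le_sub_comm, div_le_iff₀ hprod] at h
  linarith

theorem deriv_mul_deriv_mul_sq_le_of_schwarzianDeriv_nonpos (hF : ContDiff ℝ 3 F) {x y : ℝ}
    (hxy : x < y) (hpos : ∀ t ∈ Icc x y, 0 < deriv F t)
    (hS : ∀ t ∈ Icc x y, schwarzianDeriv F t ≤ 0) :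
    deriv F x * deriv F y * (y - x) ^ 2 ≤ (F y - F x) ^ 2 := by
  have hx := hpos x (left_mem_Icc.mpr hxy.le)
  have hy := hpos y (right_mem_Icc.mpr hxy.le)
  have h := sub_le_mul_sub_of_convexOn hxy
    (fun t ht => by
      rw [inv_pow, Real.sq_sqrt (hpos t ht).le, inv_inv]
      exact (hF.differentiable (by norm_num) t).hasDerivAt)
    (convexOn_inv_sqrt_deriv_of_schwarzianDeriv_nonpos hF (convex_Icc x y) hpos hS)
    fun t ht => inv_pos.mpr (Real.sqrt_pos.mpr (hpos t ht))
  have hsq := pow_le_pow_left₀ (sub_pos.mpr hxy).le h 2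
  rw [mul_pow, mul_pow, inv_pow, inv_pow, Real.sq_sqrt hx.le, Real.sq_sqrt hy.le, ← mul_inv,
    inv_mul_eq_div, le_div_iff₀ (mul_pos hx hy)] at hsq
  linarith

end Schwarzian

section InfinitesimalCrossRatio

variable {F : ℝ → ℝ} {a b c d : ℝ}

theorem antitoneOn_deriv_div_sub (hF : Differentiable ℝ F) (hmono : StrictMono F) {y : ℝ}
    (hby : b < y)
    (h : ∀ x ∈ Icc a b, deriv F x * deriv F y * (y - x) ^ 2 ≤ (F y - F x) ^ 2) :
    AntitoneOn (fun x => deriv F y / (F y - F x) - 1 / (y - x)) (Icc a b) := by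
  have hlt : ∀ x ∈ Icc a b, 0 < y - x ∧ 0 < F y - F x := fun x hx =>
    ⟨sub_pos.mpr (hx.2.trans_lt hby), sub_pos.mpr (hmono (hx.2.trans_lt hby))⟩
  have hderiv : ∀ x ∈ Icc a b, HasDerivAt (fun x => deriv F y / (F y - F x) - 1 / (y - x))
      (deriv F x * deriv F y / (F y - F x) ^ 2 - 1 / (y - x) ^ 2) x := fun x hx => by
    have hleft := (hasDerivAt_const x (deriv F y)).div
      ((hF x).hasDerivAt.const_sub (F y)) (hlt x hx).2.ne'
    have hright := (hasDerivAt_const x (1 : ℝ)).div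
      ((hasDerivAt_id x).const_sub y) (hlt x hx).1.ne'
    exact (hleft.sub hright).congr_deriv (by simp [mul_comm])
  refine antitoneOn_of_hasDerivWithinAt_nonpos (convex_Icc a b)
    (fun x hx => (hderiv x hx).continuousAt.continuousWithinAt)
    (fun x hx => (hderiv x (interior_subset hx)).hasDerivWithinAt) fun x hx => ?_
  have hx' := interior_subset hx
  have hpos := hlt x hx'
  rw [sub_nonpos, div_le_div_iff₀ (pow_pos hpos.2 2) (pow_pos hpos.1 2), one_mul]
  exact h x hx'

theorem antitoneOn_log_sub_log (hF : Differentiable ℝ F) (hmono : StrictMono F) (hab : a < b)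
    (hbc : b < c) (h : ∀ x ∈ Icc a b, ∀ y ∈ Icc c d,
      deriv F x * deriv F y * (y - x) ^ 2 ≤ (F y - F x) ^ 2) :
    AntitoneOn (fun y => Real.log (F y - F b) - Real.log (y - b) -
      (Real.log (F y - F a) - Real.log (y - a))) (Icc c d) := by
  have hlog : ∀ x y, x < y → HasDerivAt (fun y => Real.log (F y - F x) - Real.log (y - x))
      (deriv F y / (F y - F x) - 1 / (y - x)) y := fun x y hxy =>
    (((hF y).hasDerivAt.sub_const _).log (sub_pos.mpr (hmono hxy)).ne').sub
      (((hasDerivAt_id y).sub_const x).log (sub_pos.mpr hxy).ne')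
  have hderiv := fun y (hy : y ∈ Icc c d) =>
    (hlog b y (hbc.trans_le hy.1)).sub (hlog a y ((hab.trans hbc).trans_le hy.1))
  refine antitoneOn_of_hasDerivWithinAt_nonpos (convex_Icc c d)
    (fun y hy => (hderiv y hy).continuousAt.continuousWithinAt)
    (fun y hy => (hderiv y (interior_subset hy)).hasDerivWithinAt) fun y hy => ?_
  have hy' := interior_subset hy
  exact sub_nonpos.mpr (antitoneOn_deriv_div_sub hF hmono (hbc.trans_le hy'.1)
    (fun x hx => h x hx y hy') (left_mem_Icc.mpr hab.le) (right_mem_Icc.mpr hab.le) hab.le)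

theorem crossRatio_map_le_of_deriv_mul_deriv_mul_sq_le (hF : Differentiable ℝ F)
    (hmono : StrictMono F) (hab : a < b) (hbc : b < c) (hcd : c < d)
    (h : ∀ x ∈ Icc a b, ∀ y ∈ Icc c d,
      deriv F x * deriv F y * (y - x) ^ 2 ≤ (F y - F x) ^ 2) :
    crossRatio (F a) (F b) (F c) (F d) ≤ crossRatio a b c d := by
  have hpos : ∀ {x y}, x < y → 0 < y - x ∧ 0 < F y - F x := fun hxy =>
    ⟨sub_pos.mpr hxy, sub_pos.mpr (hmono hxy)⟩
  obtain ⟨hac, hFac⟩ := hpos (hab.trans hbc)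
  obtain ⟨hbd, hFbd⟩ := hpos (hbc.trans hcd)
  obtain ⟨had, hFad⟩ := hpos (hab.trans (hbc.trans hcd))
  obtain ⟨_, hFbc⟩ := hpos hbc
  have hle := antitoneOn_log_sub_log hF hmono hab hbc h (left_mem_Icc.mpr hcd.le)
    (right_mem_Icc.mpr hcd.le) hcd.le
  have hlog : Real.log ((F d - F b) * (F c - F a) * ((c - b) * (d - a)))
      ≤ Real.log ((F c - F b) * (F d - F a) * ((d - b) * (c - a))) := by
    rw [Real.log_mul, Real.log_mul, Real.log_mul, Real.log_mul, Real.log_mul, Real.log_mul] <;>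
      first | positivity | linarith
  have hprod := (Real.log_le_log_iff (by positivity) (by positivity)).mp hlog
  rw [crossRatio, crossRatio, div_le_div_iff₀ (by positivity) (by positivity)]
  linarith

theorem crossRatio_map_le_of_schwarzianDeriv_nonpos (hF : ContDiff ℝ 3 F) (hmono : StrictMono F)
    (hab : a < b) (hbc : b < c) (hcd : c < d) (hpos : ∀ x ∈ Icc a d, 0 < deriv F x)
    (hS : ∀ x ∈ Icc a d, schwarzianDeriv F x ≤ 0) :
    crossRatio (F a) (F b) (F c) (F d) ≤ crossRatio a b c d :=
  crossRatio_map_le_of_deriv_mul_deriv_mul_sq_le (hF.differentiable (by norm_num)) hmono hab hbc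
    hcd fun x hx y hy => deriv_mul_deriv_mul_sq_le_of_schwarzianDeriv_nonpos hF
      ((hx.2.trans_lt hbc).trans_le hy.1)
      (fun t ht => hpos t ⟨hx.1.trans ht.1, ht.2.trans hy.2⟩)
      fun t ht => hS t ⟨hx.1.trans ht.1, ht.2.trans hy.2⟩

end InfinitesimalCrossRatio

/-! ### Distortion of a multicritical circle map -/

section DerivBounds

variable {F : ℝ → ℝ} {κ : ℝ}

theorem sub_mul_sub_le_of_deriv_mul_sub_le (hF : Differentiable ℝ F) {u v x y : ℝ} (huv : u < v)
    (hux : u ≤ x) (hxy : x ≤ y) (hyv : y ≤ v)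
    (h : ∀ t ∈ Icc u v, deriv F t * (v - u) ≤ κ * (F v - F u)) :
    (F y - F x) * (v - u) ≤ κ * (F v - F u) * (y - x) := by
  have hsub : Icc x y ⊆ Icc u v := Icc_subset_Icc hux hyv
  have hmean := (convex_Icc x y).image_sub_le_mul_sub_of_deriv_le hF.continuous.continuousOn
    hF.differentiableOn
    (fun t ht => (le_div_iff₀ (sub_pos.mpr huv)).mpr (h t (hsub (interior_subset ht))))
    x (left_mem_Icc.mpr hxy) y (right_mem_Icc.mpr hxy) hxy
  rwa [div_mul_eq_mul_div, le_div_iff₀ (sub_pos.mpr huv)] at hmean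

theorem crossRatio_map_le_sq_mul_crossRatio (hF : Differentiable ℝ F) (hmono : StrictMono F)
    (hκ : 0 ≤ κ) {a b c d : ℝ} (hab : a < b) (hbc : b < c) (hcd : c < d)
    (h : ∀ u v, a ≤ u → u < v → v ≤ d → ∀ x ∈ Icc u v,
      deriv F x * (v - u) ≤ κ * (F v - F u)) :
    crossRatio (F a) (F b) (F c) (F d) ≤ κ ^ 2 * crossRatio a b c d := by
  have hac := hab.trans hbc
  have hbd := hbc.trans hcd
  have hFab := sub_pos.mpr (hmono hab)
  have hFcd := sub_pos.mpr (hmono hcd)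
  have hFac := sub_pos.mpr (hmono hac)
  have hFbd := sub_pos.mpr (hmono hbd)
  have hleft := sub_mul_sub_le_of_deriv_mul_sub_le hF hac le_rfl hab.le hbc.le
    (h a c le_rfl hac hcd.le)
  have hright := sub_mul_sub_le_of_deriv_mul_sub_le hF hbd hbc.le hcd.le le_rfl
    (h b d hab.le hbd le_rfl)
  rw [← sub_pos] at hab hcd hac hbd
  rw [crossRatio, crossRatio, ← mul_div_assoc, div_le_div_iff₀ (by positivity) (by positivity)]
  linear_combination mul_le_mul hleft hright (by positivity) (by positivity)

theorem deriv_mul_sub_le_of_le_exp (hF : Differentiable ℝ F) {A : ℝ} {u v : ℝ} (huv : u ≤ v)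
    {x : ℝ} (h : ∀ y ∈ Icc u v, deriv F x ≤ Real.exp A * deriv F y) :
    deriv F x * (v - u) ≤ Real.exp A * (F v - F u) := by
  have hmean := (convex_Icc u v).mul_sub_le_image_sub_of_le_deriv hF.continuous.continuousOn
    hF.differentiableOn
    (fun t ht => (div_le_iff₀' (Real.exp_pos A)).mpr (h t (interior_subset ht)))
    u (left_mem_Icc.mpr huv) v (right_mem_Icc.mpr huv) huv
  rwa [div_mul_eq_mul_div, div_le_iff₀' (Real.exp_pos A)] at hmean

theorem exists_deriv_le_exp_mul_deriv {z : ℝ} (hF : ContDiff ℝ 2 F) (hz : 0 < deriv F z) :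
    ∃ A, 0 ≤ A ∧ ∃ r > 0, ∀ x ∈ Metric.ball z r, ∀ y ∈ Metric.ball z r,
      deriv F x ≤ Real.exp (A * |x - y|) * deriv F y := by
  have hF₁ : ContDiff ℝ 1 (deriv F) := (contDiff_succ_iff_deriv (n := 1).mp hF).2.2
  obtain ⟨A, U, hU, hlip⟩ := (hF₁.contDiffAt.log hz.ne').exists_lipschitzOnWith
  obtain ⟨r, hr, hball⟩ := Metric.mem_nhds_iff.mp
    (inter_mem hU (hF₁.continuous.continuousAt.eventually (lt_mem_nhds hz)))
  refine ⟨A, A.2, r, hr, fun x hx y hy => ?_⟩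
  have h := hlip.dist_le_mul x (hball hx).1 y (hball hy).1
  rw [Real.dist_eq, Real.dist_eq] at h
  rw [← Real.log_le_log_iff (hball hx).2 (mul_pos (Real.exp_pos _) (hball hy).2),
    Real.log_mul (Real.exp_pos _).ne' (ne_of_gt (hball hy).2), Real.log_exp]
  linarith [le_abs_self (Real.log (deriv F x) - Real.log (deriv F y))]

end DerivBounds

section PowerLaw

variable {F : ℝ → ℝ} {z r α β s : ℝ}

theorem deriv_mul_sub_le_of_quarter (hF : Differentiable ℝ F) (hmono : StrictMono F) (hα : 0 < α)
    (hβ : 0 < β) {a b u v x ℓ : ℝ} (hau : a ≤ u) (huv : u < v) (hvb : v ≤ b)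
    (hquarter : b - a = 4 * (v - u)) (hℓ : 0 < ℓ) (hx : deriv F x ≤ β * ℓ ^ (s - 1))
    (hlow : ∀ y ∈ Ioo u v, α * (ℓ / 2) ^ (s - 1) ≤ deriv F y) :
    deriv F x * (b - a) ≤ 4 * (β / α) * 2 ^ (s - 1) * (F b - F a) := by
  have hmean := (convex_Icc u v).mul_sub_le_image_sub_of_le_deriv hF.continuous.continuousOn
    hF.differentiableOn (by rwa [interior_Icc]) u (left_mem_Icc.mpr huv.le) v
    (right_mem_Icc.mpr huv.le) huv.le
  have hFba : F v - F u ≤ F b - F a := by linarith [hmono.monotone hau, hmono.monotone hvb]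
  have hba : 0 ≤ b - a := by linarith
  calc deriv F x * (b - a) ≤ β * ℓ ^ (s - 1) * (b - a) := by gcongr
    _ = 4 * (β / α) * 2 ^ (s - 1) * (α * (ℓ / 2) ^ (s - 1) * (v - u)) := by
      rw [hquarter, Real.div_rpow hℓ.le zero_le_two]
      field_simp
    _ ≤ 4 * (β / α) * 2 ^ (s - 1) * (F b - F a) := by
      gcongr
      exact hmean.trans hFba

/-- The quarter of `[a, b]` farthest from `z` lies at least half as far from `z` as any point of
`[a, b]`. -/
theorem deriv_mul_sub_le_of_powerLaw (hF : Differentiable ℝ F) (hmono : StrictMono F)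
    (hα : 0 < α) (hβ : 0 < β) (hs : 1 < s) (hz : deriv F z = 0)
    (hpow : ∀ x ∈ Metric.ball z r, x ≠ z →
      α * |x - z| ^ (s - 1) ≤ deriv F x ∧ deriv F x ≤ β * |x - z| ^ (s - 1))
    {a b x : ℝ} (hab : a < b) (hsub : Icc a b ⊆ Metric.ball z r) (hx : x ∈ Icc a b) :
    deriv F x * (b - a) ≤ 4 * (β / α) * 2 ^ (s - 1) * (F b - F a) := by
  have : 0 ≤ s - 1 := by linarith
  have hup : ∀ ℓ, 0 < ℓ → |x - z| ≤ ℓ → deriv F x ≤ β * ℓ ^ (s - 1) := fun ℓ hℓ hxℓ => by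
    rcases eq_or_ne x z with rfl | hxz
    · rw [hz]
      positivity
    · exact (hpow x (hsub hx) hxz).2.trans (by gcongr)
  have hlow : ∀ ℓ, 0 < ℓ → ∀ y ∈ Icc a b, ℓ / 2 ≤ |y - z| →
      α * (ℓ / 2) ^ (s - 1) ≤ deriv F y := fun ℓ hℓ y hy hyℓ => by
    have hyz : y ≠ z := fun h => by
      rw [h, sub_self, abs_zero] at hyℓ
      linarith
    exact le_trans (by gcongr) (hpow y (hsub hy) hyz).1
  have hxz : |x - z| ≤ max (z - a) (b - z) :=
    abs_le.mpr ⟨by linarith [hx.1, le_max_left (z - a) (b - z)],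
      by linarith [hx.2, le_max_right (z - a) (b - z)]⟩
  rcases le_total (z - a) (b - z) with h | h
  · rw [max_eq_right h] at hxz
    have hℓ : 0 < b - z := by linarith
    refine deriv_mul_sub_le_of_quarter hF hmono hα hβ (u := b - (b - a) / 4) (v := b)
      (by linarith) (by linarith) le_rfl (by ring) hℓ (hup _ hℓ hxz) fun y hy => ?_
    exact hlow _ hℓ y ⟨by linarith [hy.1], hy.2.le⟩ (le_abs.mpr (.inl (by linarith [hy.1])))
  · rw [max_eq_left h] at hxz
    have hℓ : 0 < z - a := by linarith
    refine deriv_mul_sub_le_of_quarter hF hmono hα hβ (u := a) (v := a + (b - a) / 4)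
      le_rfl (by linarith) (by linarith) (by ring) hℓ (hup _ hℓ hxz) fun y hy => ?_
    exact hlow _ hℓ y ⟨hy.1.le, by linarith [hy.2]⟩ (le_abs.mpr (.inr (by linarith [hy.2])))

theorem comparable_rpow_of_deriv {G : ℝ → ℝ} (hG : Differentiable ℝ G)
    (hmono : StrictMono G) (h0 : G 0 = 0) (hα : 0 < α) (hβ : 0 < β) (hs : 1 < s)
    (hpow : ∀ t ∈ Ioo 0 r, α * t ^ (s - 1) ≤ deriv G t ∧ deriv G t ≤ β * t ^ (s - 1))
    {t : ℝ} (ht : 0 < t) (htr : t < r) : G t ≤ β * t ^ s ∧ t ^ s ≤ 2 ^ s / α * G t := by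
  have : 0 ≤ s - 1 := by linarith
  have hrpow : ∀ {t : ℝ}, 0 < t → t ^ (s - 1) * t = t ^ s := fun ht => by
    rw [← Real.rpow_add_one ht.ne', sub_add_cancel]
  have hupper := (convex_Icc 0 t).image_sub_le_mul_sub_of_deriv_le (C := β * t ^ (s - 1))
    hG.continuous.continuousOn hG.differentiableOn (fun u hu => by
      rw [interior_Icc] at hu
      have := hu.1.le
      exact (hpow u ⟨hu.1, hu.2.trans htr⟩).2.trans (by gcongr; exact hu.2.le))
    0 (left_mem_Icc.mpr ht.le) t (right_mem_Icc.mpr ht.le) ht.le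
  have hlower := (convex_Icc (t / 2) t).mul_sub_le_image_sub_of_le_deriv
    (C := α * (t / 2) ^ (s - 1)) hG.continuous.continuousOn hG.differentiableOn (fun u hu => by
      rw [interior_Icc] at hu
      exact le_trans (by gcongr; exact hu.1.le)
        (hpow u ⟨(half_pos ht).trans hu.1, hu.2.trans htr⟩).1)
    (t / 2) (left_mem_Icc.mpr (half_le_self ht.le)) t (right_mem_Icc.mpr (half_le_self ht.le))
    (half_le_self ht.le)
  rw [h0, sub_zero, sub_zero, mul_assoc, hrpow ht] at hupper
  rw [sub_half, mul_assoc, hrpow (half_pos ht), Real.div_rpow ht.le zero_le_two] at hlower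
  refine ⟨hupper, ?_⟩
  have hhalf : 0 < G (t / 2) := h0 ▸ hmono (half_pos ht)
  rw [div_mul_eq_mul_div, le_div_iff₀ hα, mul_comm, ← div_le_iff₀' (by positivity), mul_div_assoc]
  linarith

theorem exists_comparable_rpow_of_deriv {G : ℝ → ℝ} (hG : Differentiable ℝ G)
    (hmono : StrictMono G) (h0 : G 0 = 0) (hr : 0 < r) (hα : 0 < α) (hβ : 0 < β) (hs : 1 < s)
    (hpow : ∀ t ∈ Ioo 0 r, α * t ^ (s - 1) ≤ deriv G t ∧ deriv G t ≤ β * t ^ (s - 1)) :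
    ∃ K, ∀ t, 0 < t → t ≤ 1 → G t ≤ K * t ^ s ∧ t ^ s ≤ K * G t := by
  have hGpos : ∀ t, 0 < t → 0 < G t := fun t ht => h0 ▸ hmono ht
  refine ⟨max (max β (2 ^ s / α)) (max (G 1 / r ^ s) (1 / G r)), fun t ht ht1 => ?_⟩
  have hGt := hGpos t ht
  rcases lt_or_ge t r with htr | hrt
  · obtain ⟨hupper, hlower⟩ := comparable_rpow_of_deriv hG hmono h0 hα hβ hs hpow ht htr
    refine ⟨hupper.trans ?_, hlower.trans ?_⟩
    · gcongr
      exact (le_max_left _ _).trans (le_max_left _ _)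
    · gcongr
      exact (le_max_right _ _).trans (le_max_left _ _)
  · have hG1 : G t ≤ G 1 := hmono.monotone ht1
    have hGr : G r ≤ G t := hmono.monotone hrt
    refine ⟨le_trans (b := G 1 / r ^ s * t ^ s) ?_ ?_, le_trans (b := 1 / G r * G t) ?_ ?_⟩
    · rw [div_mul_eq_mul_div, le_div_iff₀ (by positivity)]
      have := hGpos 1 one_pos
      gcongr
    · gcongr
      exact (le_max_left _ _).trans (le_max_right _ _)
    · rw [div_mul_eq_mul_div, one_mul]
      exact (Real.rpow_le_one ht.le ht1 (by linarith)).trans ((one_le_div (hGpos r hr)).mpr hGr)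
    · gcongr
      exact (le_max_right _ _).trans (le_max_right _ _)

end PowerLaw

theorem periodic_deriv_of_periodic {G : ℝ → ℝ} {T : ℝ} (h : Function.Periodic G T) :
    Function.Periodic (deriv G) T := fun x => by
  rw [← deriv_comp_add_const, h.funext]

theorem exists_forall_of_locally_of_periodic {P : ℝ → ℝ → ℝ → Prop}
    (hmono : ∀ K K' a b, K ≤ K' → P K a b → P K' a b)
    (hper : ∀ K a b (m : ℤ), P K (a - m) (b - m) → P K a b)
    (hloc : ∀ z, ∃ K, ∃ r > 0, ∀ a b, Icc a b ⊆ Metric.ball z r → P K a b) :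
    ∃ K, ∃ δ > 0, ∀ a b, b - a < δ → P K a b := by
  suffices h : ∃ K, ∃ δ > 0, ∀ a ∈ Icc (0 : ℝ) 1, ∀ b, b - a < δ → P K a b by
    obtain ⟨K, δ, hδ, h⟩ := h
    refine ⟨K, δ, hδ, fun a b hab => hper K a b ⌊a⌋ (h _ ?_ _ (by linarith))⟩
    exact ⟨Int.fract_nonneg a, (Int.fract_lt_one a).le⟩
  refine isCompact_Icc.induction_on
    (p := fun s => ∃ K, ∃ δ > 0, ∀ a ∈ s, ∀ b, b - a < δ → P K a b)
    ⟨0, 1, one_pos, fun a ha => ha.elim⟩ ?_ ?_ ?_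
  · rintro s t hst ⟨K, δ, hδ, h⟩
    exact ⟨K, δ, hδ, fun a ha => h a (hst ha)⟩
  · rintro s t ⟨K, δ, hδ, hs⟩ ⟨K', δ', hδ', ht⟩
    refine ⟨max K K', min δ δ', lt_min hδ hδ', fun a ha b hab => ?_⟩
    rcases ha with ha | ha
    · exact hmono K _ a b (le_max_left _ _) (hs a ha b (hab.trans_le (min_le_left _ _)))
    · exact hmono K' _ a b (le_max_right _ _) (ht a ha b (hab.trans_le (min_le_right _ _)))
  · intro z _
    obtain ⟨K, r, hr, h⟩ := hloc z
    refine ⟨Metric.ball z (r / 2),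
      mem_nhdsWithin_of_mem_nhds (Metric.ball_mem_nhds z (half_pos hr)), K, r / 2,
      half_pos hr, fun a ha b hab => h a b fun x hx => ?_⟩
    rw [Metric.mem_ball, Real.dist_eq, abs_lt] at ha ⊢
    constructor <;> linarith [hx.1, hx.2]

namespace MCM

variable (f : MCM)

/-- The lift of a multicritical circle map as an element of the monoid of degree one lifts. -/
def lift : CircleDeg1Lift := ⟨⟨f.F, f.mono.monotone⟩, f.deg1⟩

theorem lift_pow_apply (k : ℕ) (x : ℝ) : (f.lift ^ k) x = f.F^[k] x :=
  congrFun (f.lift.coe_pow k) x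

theorem F_sub_int (x : ℝ) (m : ℤ) : f.F (x - m) = f.F x - m :=
  f.lift.map_sub_int x m

theorem differentiable : Differentiable ℝ f.F := f.smooth.differentiable (by norm_num)

theorem deriv_nonneg (x : ℝ) : 0 ≤ deriv f.F x := f.mono.monotone.deriv_nonneg

theorem periodic_deriv : Function.Periodic (deriv f.F) 1 := fun x => by
  rw [← deriv_comp_add_const, funext f.deg1, deriv_add_const]

theorem deriv_sub_int (x : ℝ) (m : ℤ) : deriv f.F (x - m) = deriv f.F x := by
  simpa only [mul_one] using f.periodic_deriv.sub_int_mul_eq m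

theorem schwarzianDeriv_sub_int (x : ℝ) (m : ℤ) :
    schwarzianDeriv f.F (x - m) = schwarzianDeriv f.F x := by
  have h₂ := periodic_deriv_of_periodic f.periodic_deriv
  have h := h₂.div f.periodic_deriv
  have h' := periodic_deriv_of_periodic h
  have := (h'.sub (h.comp fun y => (1 / 2) * y ^ 2)).sub_int_mul_eq (x := x) m
  rwa [mul_one] at this

theorem exists_powerLaw_near {z : ℝ} (hz : deriv f.F z = 0) :
    ∃ α > 0, ∃ β > 0, ∃ s > (1 : ℝ), ∃ r > 0, ∀ x ∈ Metric.ball z r, x ≠ z →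
      (α * |x - z| ^ (s - 1) ≤ deriv f.F x ∧ deriv f.F x ≤ β * |x - z| ^ (s - 1)) ∧
        schwarzianDeriv f.F x ≤ 0 := by
  obtain ⟨i, m, rfl⟩ := f.critOnly z hz
  obtain ⟨r, hr, hball⟩ := Metric.isOpen_iff.mp (f.W_open i) _ (f.c_mem_W i)
  refine ⟨f.al i, f.al_pos i, f.be i, (f.al_pos i).trans (f.al_lt_be i), f.s i, f.s_gt_one i, r, hr,
    fun x hx hxz => ?_⟩
  have hsub : x - m - f.c i = x - (f.c i + m) := by ring
  have hW : x - m ∈ f.W i := hball (by rwa [Metric.mem_ball, Real.dist_eq, hsub])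
  have hne : x - m ≠ f.c i := fun h => hxz (by linarith)
  have hpow := f.powerLaw i _ hW hne
  have hS := f.negSchwarzian i _ hW hne
  rw [f.deriv_sub_int, hsub] at hpow
  rw [f.schwarzianDeriv_sub_int] at hS
  exact ⟨⟨hpow.1.le, hpow.2.le⟩, hS.le⟩

theorem exists_deriv_mul_sub_le_near (z : ℝ) :
    ∃ K, ∃ r > 0, ∀ a b, Icc a b ⊆ Metric.ball z r → ∀ x ∈ Icc a b,
      deriv f.F x * (b - a) ≤ K * (f.F b - f.F a) := by
  rcases (f.deriv_nonneg z).eq_or_lt with hz | hz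
  · obtain ⟨α, hα, β, hβ, s, hs, r, hr, hnear⟩ := f.exists_powerLaw_near hz.symm
    refine ⟨4 * (β / α) * 2 ^ (s - 1), r, hr, fun a b hsub x hx => ?_⟩
    rcases (hx.1.trans hx.2).eq_or_lt with rfl | hab
    · simp
    · exact deriv_mul_sub_le_of_powerLaw f.differentiable f.mono hα hβ hs hz.symm
        (fun y hy hyz => (hnear y hy hyz).1) hab hsub hx
  · obtain ⟨A, hA, r, hr, h⟩ := exists_deriv_le_exp_mul_deriv (f.smooth.of_le (by norm_num)) hz
    refine ⟨Real.exp (A * (r + r)), r, hr, fun a b hsub x hx =>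
      deriv_mul_sub_le_of_le_exp f.differentiable (hx.1.trans hx.2) fun y hy => ?_⟩
    have hdist : |x - y| ≤ r + r := by
      linarith [dist_triangle_right x y z, Metric.mem_ball.mp (hsub hx),
        Metric.mem_ball.mp (hsub hy), Real.dist_eq x y]
    refine (h x (hsub hx) y (hsub hy)).trans ?_
    have := f.deriv_nonneg y
    gcongr

theorem exists_deriv_mul_sub_le_of_sub_lt :
    ∃ K, 0 ≤ K ∧ ∃ δ > 0, ∀ a b, b - a < δ → ∀ x ∈ Icc a b,
      deriv f.F x * (b - a) ≤ K * (f.F b - f.F a) := by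
  have hincr : ∀ {a b x}, x ∈ Icc a b → 0 ≤ f.F b - f.F a := fun hx =>
    sub_nonneg.mpr (f.mono.monotone (hx.1.trans hx.2))
  obtain ⟨K, δ, hδ, h⟩ := exists_forall_of_locally_of_periodic
    (P := fun K a b => ∀ x ∈ Icc a b, deriv f.F x * (b - a) ≤ K * (f.F b - f.F a))
    (fun K K' a b hK h x hx => (h x hx).trans (mul_le_mul_of_nonneg_right hK (hincr hx)))
    (fun K a b m h x hx => by
      simpa only [f.deriv_sub_int, f.F_sub_int, sub_sub_sub_cancel_right] using
        h (x - m) ⟨sub_le_sub_right hx.1 _, sub_le_sub_right hx.2 _⟩)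
    f.exists_deriv_mul_sub_le_near
  exact ⟨max K 0, le_max_right _ _, δ, hδ, fun a b hab x hx => (h a b hab x hx).trans
    (mul_le_mul_of_nonneg_right (le_max_left _ _) (hincr hx))⟩

theorem exists_deriv_mul_sub_le (L : ℝ) :
    ∃ K, 1 ≤ K ∧ ∀ a b, b ≤ a + L → ∀ x ∈ Icc a b,
      deriv f.F x * (b - a) ≤ K * (f.F b - f.F a) := by
  obtain ⟨K, hK, δ, hδ, h⟩ := f.exists_deriv_mul_sub_le_of_sub_lt
  refine ⟨1 + K + 2 * |L| / δ * K, by simp only [le_add_iff_nonneg_right, add_assoc]; positivity,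
    fun a b hab x hx => ?_⟩
  have hle : ∀ {u v}, a ≤ u → v ≤ b → f.F v - f.F u ≤ f.F b - f.F a := fun hu hv =>
    sub_le_sub (f.mono.monotone hv) (f.mono.monotone hu)
  have hincr : 0 ≤ f.F b - f.F a := sub_nonneg.mpr (f.mono.monotone (hx.1.trans hx.2))
  rcases lt_or_ge (b - a) δ with hlt | hge
  · refine (h a b hlt x hx).trans ?_
    gcongr
    have : 0 ≤ 2 * |L| / δ * K := by positivity
    linarith
  · have hhalf : deriv f.F x * (δ / 2) ≤ K * (f.F b - f.F a) := by
      rcases le_total (a + δ / 2) x with hx' | hx'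
      · have := h (x - δ / 2) x (by linarith) x ⟨by linarith, le_rfl⟩
        rw [sub_sub_cancel] at this
        exact this.trans (mul_le_mul_of_nonneg_left (hle (by linarith) hx.2) hK)
      · have := h x (x + δ / 2) (by linarith) x ⟨le_rfl, by linarith⟩
        rw [add_sub_cancel_left] at this
        exact this.trans (mul_le_mul_of_nonneg_left (hle hx.1 (by linarith)) hK)
    have hba : b - a ≤ |L| := by linarith [le_abs_self L]
    have hx0 := f.deriv_nonneg x
    calc deriv f.F x * (b - a) ≤ deriv f.F x * |L| := by gcongr
      _ = 2 * |L| / δ * (deriv f.F x * (δ / 2)) := by field_simp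
      _ ≤ 2 * |L| / δ * (K * (f.F b - f.F a)) := by gcongr
      _ ≤ (1 + K + 2 * |L| / δ * K) * (f.F b - f.F a) := by
        rw [← mul_assoc]
        gcongr
        linarith

end MCM

theorem floor_add_ceil_lt_floor_add_ceil {u v : ℝ} {m : ℤ} (huv : u < v) (hu : u ≤ m)
    (hv : m ≤ v) : ⌊u⌋ + ⌈u⌉ < ⌊v⌋ + ⌈v⌉ := by
  rcases hu.lt_or_eq with hu' | rfl
  · exact add_lt_add_of_lt_of_le ((Int.floor_lt.mpr hu').trans_le (Int.le_floor.mpr hv))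
      (Int.ceil_mono huv.le)
  · exact add_lt_add_of_le_of_lt (Int.floor_mono huv.le)
      ((Int.ceil_le.mpr hu).trans_lt (Int.lt_ceil.mpr huv))

namespace MCM

variable (f : MCM)

theorem deriv_pos {x : ℝ} (h : deriv f.F x ≠ 0) : 0 < deriv f.F x :=
  (f.deriv_nonneg x).lt_of_ne' h

theorem exists_crossRatio_le_near (z : ℝ) :
    ∃ A, ∃ r > 0, ∀ a d, Icc a d ⊆ Metric.ball z r → ∀ b c, a < b → b < c → c < d →
      (∀ x ∈ Icc a d, deriv f.F x ≠ 0) →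
        crossRatio (f.F a) (f.F b) (f.F c) (f.F d) ≤
          Real.exp (A * (d - a)) * crossRatio a b c d := by
  rcases (f.deriv_nonneg z).eq_or_lt with hz | hz
  · obtain ⟨_, -, _, -, _, -, r, hr, hnear⟩ := f.exists_powerLaw_near hz.symm
    refine ⟨0, r, hr, fun a d hsub b c hab hbc hcd hne => ?_⟩
    rw [zero_mul, Real.exp_zero, one_mul]
    refine crossRatio_map_le_of_schwarzianDeriv_nonpos f.smooth f.mono hab hbc hcd
      (fun x hx => f.deriv_pos (hne x hx)) fun x hx => (hnear x (hsub hx) ?_).2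
    rintro rfl
    exact hne x hx hz.symm
  · obtain ⟨A, hA, r, hr, h⟩ := exists_deriv_le_exp_mul_deriv (f.smooth.of_le (by norm_num)) hz
    refine ⟨2 * A, r, hr, fun a d hsub b c hab hbc hcd _ => ?_⟩
    have hsq : Real.exp (2 * A * (d - a)) = Real.exp (A * (d - a)) ^ 2 := by
      rw [← Real.exp_nat_mul, mul_assoc, Nat.cast_ofNat]
    rw [hsq]
    refine crossRatio_map_le_sq_mul_crossRatio f.differentiable f.mono (Real.exp_pos _).le
      hab hbc hcd fun u v hu huv hv x hx => ?_
    refine deriv_mul_sub_le_of_le_exp f.differentiable huv.le fun y hy => ?_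
    have hdist : |x - y| ≤ d - a := by
      rw [abs_le]
      constructor <;> linarith [hx.1, hx.2, hy.1, hy.2]
    have hmem : ∀ w ∈ Icc u v, w ∈ Metric.ball z r := fun w hw =>
      hsub ⟨hu.trans hw.1, hw.2.trans hv⟩
    refine (h x (hmem x hx) y (hmem y hy)).trans ?_
    have := f.deriv_nonneg y
    gcongr

theorem exists_crossRatio_le_of_sub_lt :
    ∃ A, ∃ δ > 0, ∀ a d, d - a < δ → ∀ b c, a < b → b < c → c < d →
      (∀ x ∈ Icc a d, deriv f.F x ≠ 0) →
        crossRatio (f.F a) (f.F b) (f.F c) (f.F d) ≤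
          Real.exp (A * (d - a)) * crossRatio a b c d := by
  refine exists_forall_of_locally_of_periodic
    (P := fun A a d => ∀ b c, a < b → b < c → c < d → (∀ x ∈ Icc a d, deriv f.F x ≠ 0) →
      crossRatio (f.F a) (f.F b) (f.F c) (f.F d) ≤
        Real.exp (A * (d - a)) * crossRatio a b c d)
    (fun A A' a d hA h b c hab hbc hcd hne => (h b c hab hbc hcd hne).trans ?_)
    (fun A a d m h b c hab hbc hcd hne => ?_) f.exists_crossRatio_le_near
  · have := (crossRatio_pos hab hbc hcd).le
    have : 0 ≤ d - a := by linarith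
    gcongr
  · have h' := h (b - m) (c - m) (by linarith) (by linarith) (by linarith) fun x hx => by
      have := hne (x + m) ⟨by linarith [hx.1], by linarith [hx.2]⟩
      rwa [← f.deriv_sub_int _ m, add_sub_cancel_right] at this
    simpa only [f.F_sub_int, crossRatio_sub_const, sub_sub_sub_cancel_right] using h'

/-- A count of the critical points of the lift up to `t`, each weighted `2`. A critical point
contributes once through `⌈·⌉` when it is passed strictly and once through `⌊·⌋` as soon as it is
reached, so that the count increases on every nontrivial closed interval with a critical point,
even at an endpoint. -/
def critCount (t : ℝ) : ℤ := ∑ i, (⌊t - f.c i⌋ + ⌈t - f.c i⌉)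

theorem monotone_critCount : Monotone f.critCount := fun _ _ h =>
  Finset.sum_le_sum fun _ _ =>
    add_le_add (Int.floor_mono (sub_le_sub_right h _)) (Int.ceil_mono (sub_le_sub_right h _))

theorem critCount_add_one (t : ℝ) : f.critCount (t + 1) = f.critCount t + 2 * f.N := by
  have h : ∀ i, ⌊t + 1 - f.c i⌋ + ⌈t + 1 - f.c i⌉ = ⌊t - f.c i⌋ + ⌈t - f.c i⌉ + 2 := fun i => by
    rw [add_sub_right_comm, Int.floor_add_one, Int.ceil_add_one]
    ring
  simp only [critCount, h, Finset.sum_add_distrib, Finset.sum_const, Finset.card_univ,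
    Fintype.card_fin, nsmul_eq_mul, mul_comm]

theorem critCount_lt_critCount {a d x : ℝ} (had : a < d) (hx : x ∈ Icc a d)
    (hcrit : deriv f.F x = 0) : f.critCount a < f.critCount d := by
  obtain ⟨i, m, rfl⟩ := f.critOnly x hcrit
  refine Finset.sum_lt_sum (fun j _ => ?_) ⟨i, Finset.mem_univ i, ?_⟩
  · exact add_le_add (Int.floor_mono (sub_le_sub_right had.le _))
      (Int.ceil_mono (sub_le_sub_right had.le _))
  · exact floor_add_ceil_lt_floor_add_ceil (sub_lt_sub_right had _) (by linarith [hx.1])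
      (le_sub_iff_add_le'.mpr hx.2)

/-- The distortion gauge of a multicritical circle map: length plus number of critical points,
times a constant. -/
def gauge (B : ℝ) : ℝ →+c[1, B * (2 * f.N + 1)] ℝ where
  toFun t := B * (t + f.critCount t)
  map_add_const' t := by
    rw [critCount_add_one]
    push_cast
    ring

theorem gauge_sub_gauge (B a d : ℝ) :
    f.gauge B d - f.gauge B a = B * (d - a + (f.critCount d - f.critCount a)) := by
  change B * (d + f.critCount d) - B * (a + f.critCount a) = _
  ring

theorem mul_sub_le_gauge_sub {A B a d : ℝ} (hAB : A ≤ B) (hB : 0 ≤ B) (had : a ≤ d) :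
    A * (d - a) ≤ f.gauge B d - f.gauge B a := by
  have hcount : (0 : ℝ) ≤ f.critCount d - f.critCount a :=
    sub_nonneg.mpr (Int.cast_le.mpr (f.monotone_critCount had))
  rw [gauge_sub_gauge]
  exact mul_le_mul hAB (le_add_of_nonneg_right hcount) (sub_nonneg.mpr had) hB

theorem min_le_sub_add_critCount_sub {a d δ : ℝ} (had : a < d)
    (h : ¬(d - a < δ ∧ ∀ x ∈ Icc a d, deriv f.F x ≠ 0)) :
    min δ 1 ≤ d - a + (f.critCount d - f.critCount a) := by
  have hcount : (f.critCount a : ℝ) ≤ f.critCount d :=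
    Int.cast_le.mpr (f.monotone_critCount had.le)
  rcases not_and_or.mp h with hlong | hcrit
  · linarith [min_le_left δ 1]
  · push Not at hcrit
    obtain ⟨x, hx, hx0⟩ := hcrit
    have : (f.critCount a : ℝ) + 1 ≤ f.critCount d := by
      exact_mod_cast Int.add_one_le_of_lt (f.critCount_lt_critCount had hx hx0)
    linarith [min_le_right δ 1]

theorem exists_hasDistortionGauge :
    ∃ (D : ℝ) (Φ : ℝ →+c[1, D] ℝ), HasDistortionGauge f.lift Φ := by
  obtain ⟨A, δ, hδ, hsmall⟩ := f.exists_crossRatio_le_of_sub_lt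
  obtain ⟨K, hK, hlarge⟩ := f.exists_deriv_mul_sub_le 3
  have hK0 : 0 < K := zero_lt_one.trans_le hK
  have hlog : 0 ≤ Real.log K := Real.log_nonneg hK
  have hmin : 0 < min δ 1 := lt_min hδ one_pos
  set B : ℝ := |A| + 2 * Real.log K / min δ 1
  have hB0 : 0 ≤ B := by positivity
  have hmono : Monotone (f.gauge B) := fun t u htu =>
    mul_le_mul_of_nonneg_left (add_le_add htu (Int.cast_le.mpr (f.monotone_critCount htu))) hB0
  refine ⟨_, f.gauge B, f.smooth.continuous, f.mono, hmono, fun {a b c d} hab hbc hcd hda => ?_⟩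
  have had : a < d := hab.trans (hbc.trans hcd)
  have hcr := (crossRatio_pos hab hbc hcd).le
  by_cases h : d - a < δ ∧ ∀ x ∈ Icc a d, deriv f.F x ≠ 0
  · refine (hsmall a d h.1 b c hab hbc hcd h.2).trans ?_
    have hAB : A ≤ B := (le_abs_self A).trans (le_add_of_nonneg_right (by positivity))
    have := f.mul_sub_le_gauge_sub hAB hB0 had.le
    gcongr
  · refine (crossRatio_map_le_sq_mul_crossRatio f.differentiable f.mono hK0.le
      hab hbc hcd fun u v hu _ hv => hlarge u v (by linarith)).trans ?_
    have hstep : min δ 1 ≤ d - a + (f.critCount d - f.critCount a) :=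
      f.min_le_sub_add_critCount_sub had h
    have hexp : 2 * Real.log K ≤ f.gauge B d - f.gauge B a := by
      rw [f.gauge_sub_gauge]
      calc 2 * Real.log K = 2 * Real.log K / min δ 1 * min δ 1 := by field_simp
        _ ≤ B * (d - a + (f.critCount d - f.critCount a)) :=
          mul_le_mul (le_add_of_nonneg_left (abs_nonneg A)) hstep hmin.le hB0
    have hsq : K ^ 2 = Real.exp (2 * Real.log K) := by
      rw [two_mul, Real.exp_add, Real.exp_log hK0, sq]
    rw [hsq]
    gcongr

theorem exists_hasPowerLaw (i : Fin f.N) :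
    ∃ K s, 0 ≤ K ∧ 1 < s ∧ HasPowerLaw f.lift (f.c i) K s := by
  obtain ⟨α, hα, β, hβ, s, hs, r, hr, hnear⟩ := f.exists_powerLaw_near (f.isCrit i)
  have hpow : ∀ σ : ℝ, |σ| = 1 → ∀ t ∈ Ioo 0 r, α * t ^ (s - 1) ≤ deriv f.F (f.c i + σ * t) ∧
      deriv f.F (f.c i + σ * t) ≤ β * t ^ (s - 1) := fun σ hσ t ht => by
    have habs : |f.c i + σ * t - f.c i| = t := by
      rw [add_sub_cancel_left, abs_mul, hσ, one_mul, abs_of_pos ht.1]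
    have hmem : f.c i + σ * t ∈ Metric.ball (f.c i) r := by
      rw [Metric.mem_ball, Real.dist_eq, habs]
      exact ht.2
    have hne : f.c i + σ * t ≠ f.c i := fun h => ht.1.ne' (by rw [← habs, h, sub_self, abs_zero])
    simpa only [habs] using (hnear _ hmem hne).1
  obtain ⟨K₁, h₁⟩ := exists_comparable_rpow_of_deriv (G := fun t => f.F (f.c i) - f.F (f.c i - t))
    ((f.differentiable.comp (differentiable_id.const_sub _)).const_sub _)
    (fun t u htu => sub_lt_sub_left (f.mono (sub_lt_sub_left htu _)) _)
    (by rw [sub_zero, sub_self]) hr hα hβ hs fun t ht => by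
      simpa only [deriv_const_sub, deriv_comp_const_sub, neg_neg, neg_one_mul, ← sub_eq_add_neg]
        using hpow (-1) (by rw [abs_neg, abs_one]) t ht
  obtain ⟨K₂, h₂⟩ := exists_comparable_rpow_of_deriv (G := fun t => f.F (f.c i + t) - f.F (f.c i))
    ((f.differentiable.comp (differentiable_id.const_add _)).sub_const _)
    (fun t u htu => sub_lt_sub_right (f.mono (add_lt_add_right htu _)) _)
    (by rw [add_zero, sub_self]) hr hα hβ hs fun t ht => by
      simpa only [deriv_sub_const, deriv_comp_const_add, one_mul] using hpow 1 abs_one t ht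
  refine ⟨|K₁| + |K₂|, s, by positivity, hs, fun t ht ht1 => ?_⟩
  have enlarge : ∀ {K y : ℝ}, K ≤ |K₁| + |K₂| → 0 ≤ y → y ≤ K * t ^ s ∧ t ^ s ≤ K * y →
      y ≤ (|K₁| + |K₂|) * t ^ s ∧ t ^ s ≤ (|K₁| + |K₂|) * y := fun hK hy h =>
    ⟨h.1.trans (by gcongr), h.2.trans (by gcongr)⟩
  exact ⟨enlarge ((le_abs_self K₁).trans (le_add_of_nonneg_right (abs_nonneg K₂)))
      (sub_nonneg.mpr (f.mono.monotone (sub_le_self _ ht.le))) (h₁ t ht ht1),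
    enlarge ((le_abs_self K₂).trans (le_add_of_nonneg_left (abs_nonneg K₁)))
      (sub_nonneg.mpr (f.mono.monotone (le_add_of_nonneg_right ht.le))) (h₂ t ht ht1)⟩

end MCM

/-! ### Closest returns of a multicritical circle map -/

theorem returnMap_le_returnMap {g : CircleDeg1Lift} (hirr : Irrational g.translationNumber)
    {q q' : ℕ} {p p' : ℤ}
    (hle : q * g.translationNumber - p ≤ q' * g.translationNumber - p') (x : ℝ) :
    returnMap g q p x ≤ returnMap g q' p' x := by
  rcases hle.lt_or_eq with hlt | heq
  · exact (returnMap_lt_returnMap x hlt).le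
  · have hq : q = q' := by
      by_contra hne
      have hne' : (q : ℤ) - q' ≠ 0 := sub_ne_zero.mpr (by exact_mod_cast hne)
      refine (hirr.intCast_mul hne').ne_int (p - p') ?_
      push_cast
      linarith
    subst hq
    have hp : p = p' := by exact_mod_cast sub_right_injective heq
    rw [hp]

theorem returnMap_mem_uIcc {g : CircleDeg1Lift} (hirr : Irrational g.translationNumber)
    {q q₁ q₂ : ℕ} {p p₁ p₂ : ℤ}
    (h : q * g.translationNumber - p ∈
      uIcc (q₁ * g.translationNumber - p₁) (q₂ * g.translationNumber - p₂)) (x : ℝ) :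
    returnMap g q p x ∈ uIcc (returnMap g q₁ p₁ x) (returnMap g q₂ p₂ x) := by
  rw [Set.mem_uIcc] at h ⊢
  exact h.imp (fun h => ⟨returnMap_le_returnMap hirr h.1 x, returnMap_le_returnMap hirr h.2 x⟩)
    fun h => ⟨returnMap_le_returnMap hirr h.1 x, returnMap_le_returnMap hirr h.2 x⟩

theorem returnMap_zero_zero (g : CircleDeg1Lift) (x : ℝ) : returnMap g 0 0 x = x := by
  simp [returnMap_apply]

theorem isRightReturnPair_of_irrational {g : CircleDeg1Lift} {τ : ℝ}
    (hτ : g.translationNumber = τ) (hirr : Irrational τ) {q q' : ℕ} {p p' : ℤ} (hq : 0 < q)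
    (hqq' : q ≤ q') (hpos : 0 < q * τ - p) (hle : q * τ - p ≤ 1) (hneg : q' * τ - p' < 0)
    (hsum : 0 < q * τ - p + (q' * τ - p'))
    (hbest : ∀ k : ℕ, 0 < k → k < q' → ∀ m : ℤ, q * τ - p ≤ |k * τ - m|) :
    IsRightReturnPair g q q' p p' := by
  subst hτ
  have hone : ∀ x, returnMap g 0 (-1) x = x + 1 := fun x => by simp [returnMap_apply]
  refine ⟨hq, hqq', fun x => ?_, fun x => ?_, fun x => ?_, fun x => ?_, fun k hk hkq m x => ?_⟩
  · nth_rw 1 [← returnMap_zero_zero _ x]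
    exact returnMap_lt_returnMap x (by simpa using hpos)
  · rw [← hone]
    exact returnMap_le_returnMap hirr (by simpa using hle) x
  · nth_rw 2 [← returnMap_zero_zero _ x]
    exact returnMap_lt_returnMap x (by simpa using hneg)
  · rw [returnMap_returnMap]
    nth_rw 1 [← returnMap_zero_zero _ x]
    exact returnMap_lt_returnMap x (by push_cast; linarith)
  · rcases le_abs.mp (hbest k hk hkq m) with h | h
    · exact Or.inl (returnMap_le_returnMap hirr h x)
    · right
      rw [returnMap_returnMap]
      nth_rw 2 [← returnMap_zero_zero _ x]
      exact returnMap_le_returnMap hirr (by push_cast; linarith) x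

theorem translationNumber_reflect (g : CircleDeg1Lift) :
    (reflect g).translationNumber = -g.translationNumber := by
  refine CircleDeg1Lift.translationNumber_eq_of_tendsto₀ _
    ((g.tendsto_translation_number₀).neg.congr fun n => ?_)
  rw [← CircleDeg1Lift.coe_pow, reflect_pow_apply, neg_zero, neg_div]

namespace MCM

variable {f : MCM} {ρ : ℝ}

theorem translationNumber_lift (hrot : HasRotationNumber f.F ρ) :
    f.lift.translationNumber = ρ :=
  CircleDeg1Lift.translationNumber_eq_of_tendsto₀ _ hrot

theorem isReturnPair (hirr : Irrational ρ) (hmem : ρ ∈ Ioo (0 : ℝ) 1)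
    (hrot : HasRotationNumber f.F ρ) (n : ℕ) :
    IsReturnPair f.lift (qDen ρ n) (qDen ρ (n + 1)) (pNum ρ n) (pNum ρ (n + 1)) := by
  have hθ := neg_one_pow_mul_returnAngle_mem_Ioo hirr hmem n
  have hθ' := (neg_one_pow_mul_returnAngle_mem_Ioo hirr hmem (n + 1)).1
  have hsum := neg_one_pow_mul_returnAngle_add_pos hirr hmem n
  have hτ := translationNumber_lift hrot
  have hbest := fun k hk hkq p =>
    (abs_returnAngle hirr hmem n).symm.trans_le
      (abs_returnAngle_le_of_lt_qDen (k := k) (n := n) hirr hmem hk hkq p)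
  have hq := qDen_pos hirr hmem n
  have hqq' := qDen_le_succ hirr hmem n
  rcases Nat.even_or_odd n with heven | hodd
  · left
    rw [pow_succ, heven.neg_one_pow] at hθ'
    rw [heven.neg_one_pow] at hθ hsum hbest
    simp only [returnAngle, one_mul, mem_Ioo] at hθ hθ' hsum hbest
    refine isRightReturnPair_of_irrational hτ hirr hq hqq' ?_ ?_ ?_ ?_ ?_
    · exact_mod_cast hθ.1
    · exact_mod_cast hθ.2.le
    · push_cast; linarith
    · push_cast; linarith
    · intro k hk hkq m
      simpa [sub_eq_add_neg] using hbest k hk hkq (-m)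
  · right
    rw [pow_succ, hodd.neg_one_pow] at hθ'
    rw [hodd.neg_one_pow] at hθ hsum hbest
    simp only [returnAngle, mem_Ioo] at hθ hθ' hsum hbest
    have hτ' : (reflect f.lift).translationNumber = -ρ := by rw [translationNumber_reflect, hτ]
    refine isRightReturnPair_of_irrational hτ' hirr.neg hq hqq' ?_ ?_ ?_ ?_ ?_
    · push_cast; linarith
    · push_cast; linarith
    · push_cast; linarith
    · push_cast; linarith
    · intro k hk hkq m
      refine le_of_eq_of_le ?_ ((hbest k hk hkq m).trans_eq ?_)
      · push_cast; ring
      · rw [← abs_neg]; ring_nf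

end MCM

/-! ### Comparability of gaps -/

namespace MCM

open Asymptotics

/-- The lift of `f^{q_n}` whose translation number is closest to zero, so that `x` and
`closestReturn f ρ n x` are the endpoints of a lift of the interval `I_n(x)`. -/
def closestReturn (f : MCM) (ρ : ℝ) (n : ℕ) : CircleDeg1Lift :=
  returnMap f.lift (qDen ρ n) (pNum ρ n)

/-- The signed length of `I_n(x)`. -/
def gap (f : MCM) (ρ : ℝ) (n : ℕ) (x : ℝ) : ℝ := f.closestReturn ρ n x - x

/-- The intervals `I_n(x)` are comparable to their subintervals `I_{n+1}(x)`, uniformly over a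
family `S` of levels `n` and points `x`; the reverse bound holds for every family. -/
def GapsComparable (f : MCM) (ρ : ℝ) {ι : Type*} (S : Set ι) (n : ι → ℕ) (x : ι → ℝ) : Prop :=
  (fun e => f.gap ρ (n e) (x e)) =O[𝓟 S] fun e => f.gap ρ (n e + 1) (x e)

variable {f : MCM} {ρ : ℝ} {ι : Type*} {S : Set ι} {n : ι → ℕ} {x y : ι → ℝ}

theorem closestReturn_apply (n : ℕ) (x : ℝ) :
    f.closestReturn ρ n x = f.F^[qDen ρ n] x - pNum ρ n := by
  rw [closestReturn, returnMap_apply, lift_pow_apply, Int.cast_natCast]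

theorem gap_add_int (n : ℕ) (x : ℝ) (m : ℤ) : f.gap ρ n (x + m) = f.gap ρ n x := by
  rw [gap, gap, CircleDeg1Lift.map_add_int, add_sub_add_right_eq_sub]

theorem GapsComparable.of_eq_add_int (h : GapsComparable f ρ S n x) {m : ι → ℤ}
    (hy : ∀ e ∈ S, y e = x e + m e) : GapsComparable f ρ S n y := by
  refine (isBigO_congr ?_ ?_).mp h <;> filter_upwards [mem_principal_self S] with e he <;>
    rw [hy e he, gap_add_int]

theorem GapsComparable.of_forall_or {A B : ι → Prop} (h : ∀ e ∈ S, A e ∨ B e)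
    (hA : ∀ T : Set ι, (∀ e ∈ T, A e) → GapsComparable f ρ T n x)
    (hB : ∀ T : Set ι, (∀ e ∈ T, B e) → GapsComparable f ρ T n x) : GapsComparable f ρ S n x :=
  ((hA {e | A e} fun _ he => he).sup (hB {e | B e} fun _ he => he)).mono
    (by rw [sup_principal]; exact principal_mono.mpr h)

section ReturnPairs

variable (hpair : ∀ n, IsReturnPair f.lift (qDen ρ n) (qDen ρ (n + 1)) (pNum ρ n) (pNum ρ (n + 1)))
include hpair

theorem exists_hasComparableSteps :
    ∃ C, 0 < C ∧ ∀ n, HasComparableSteps (f.closestReturn ρ n) C := by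
  obtain ⟨D, Φ, hΦ⟩ := f.exists_hasDistortionGauge
  exact ⟨_, stepConstant_pos (Real.exp_pos (3 * D)), fun n => (hpair n).hasComparableSteps hΦ⟩

theorem gap_isTheta_of_mem_uIcc
    (hy : ∀ e ∈ S, y e ∈ uIcc (x e) (f.closestReturn ρ (n e) (x e))) :
    (fun e => f.gap ρ (n e) (y e)) =Θ[𝓟 S] fun e => f.gap ρ (n e) (x e) := by
  obtain ⟨C, hC, hsteps⟩ := exists_hasComparableSteps hpair
  have hbound := fun e he =>
    (hsteps (n e)).of_mem_uIcc (f.closestReturn ρ (n e)).monotone hC.le (hy e he)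
  exact ⟨isBigO_principal.mpr ⟨_, fun e he => (hbound e he).1⟩,
    isBigO_principal.mpr ⟨_, fun e he => (hbound e he).2⟩⟩

theorem gap_closestReturn_succ_isTheta :
    (fun e => f.gap ρ (n e) (f.closestReturn ρ (n e + 1) (x e))) =Θ[𝓟 S]
      fun e => f.gap ρ (n e) (x e) :=
  (gap_isTheta_of_mem_uIcc hpair fun e _ => (hpair (n e)).mem_uIcc (x e)).symm

theorem gap_succ_isBigO_gap :
    (fun e => f.gap ρ (n e + 1) (x e)) =O[𝓟 S] fun e => f.gap ρ (n e) (x e) := by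
  refine IsBigO.trans (isBigO_principal.mpr ⟨1, fun e _ => ?_⟩)
    (gap_closestReturn_succ_isTheta hpair).isBigO
  rw [one_mul, Real.norm_eq_abs, gap, abs_sub_comm]
  exact abs_sub_left_of_mem_uIcc ((hpair (n e)).mem_uIcc (x e))

theorem gap_isTheta_of_mem_uIcc_succ
    (hy : ∀ e ∈ S, y e ∈ uIcc (x e) (f.closestReturn ρ (n e + 1) (x e))) :
    (fun e => f.gap ρ (n e) (y e)) =Θ[𝓟 S] fun e => f.gap ρ (n e) (x e) := by
  refine IsTheta.trans ?_ (gap_closestReturn_succ_isTheta hpair)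
  refine gap_isTheta_of_mem_uIcc hpair fun e he => ?_
  have hye := hy e he
  rw [uIcc_comm] at hye
  exact uIcc_subset_uIcc_left ((hpair (n e)).mem_uIcc (x e)) hye

theorem gapsComparable_iff_of_mem_uIcc_succ
    (hy : ∀ e ∈ S, y e ∈ uIcc (x e) (f.closestReturn ρ (n e + 1) (x e))) :
    GapsComparable f ρ S n y ↔ GapsComparable f ρ S n x :=
  ((gap_isTheta_of_mem_uIcc_succ hpair hy).isBigO_congr_left).trans
    (gap_isTheta_of_mem_uIcc hpair hy).isBigO_congr_right

theorem gapsComparable_of_iterate {j : ι → ℕ} (hj : ∀ e ∈ S, j e ≤ qDen ρ (n e + 1))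
    (h : GapsComparable f ρ S n fun e => f.F^[j e] (x e)) : GapsComparable f ρ S n x := by
  obtain ⟨D, Φ, hΦ⟩ := f.exists_hasDistortionGauge
  obtain ⟨C, hC, hsteps⟩ := exists_hasComparableSteps hpair
  obtain ⟨K, hK, hbound⟩ := h.exists_nonneg
  rw [isBigOWith_principal] at hbound
  refine isBigO_principal.mpr ⟨_, fun e he =>
    (hpair (n e)).abs_sub_le_of_pow hΦ hC.le (hsteps (n e)) hK (hj e he) ?_⟩
  rw [lift_pow_apply]
  exact hbound e he

theorem GapsComparable.iterate (h : GapsComparable f ρ S n x) {j : ι → ℕ}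
    (hj : ∀ e ∈ S, j e ≤ qDen ρ (n e + 1)) : GapsComparable f ρ S n fun e => f.F^[j e] (x e) := by
  refine gapsComparable_of_iterate hpair (j := fun e => qDen ρ (n e + 1) - j e)
    (fun e _ => Nat.sub_le _ _) ?_
  have hreturn : GapsComparable f ρ S n fun e => f.closestReturn ρ (n e + 1) (x e) :=
    (gapsComparable_iff_of_mem_uIcc_succ hpair fun _ _ => right_mem_uIcc).mpr h
  refine hreturn.of_eq_add_int (m := fun e => pNum ρ (n e + 1)) fun e he => ?_
  rw [← Function.iterate_add_apply, Nat.sub_add_cancel (hj e he), closestReturn_apply,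
    Int.cast_natCast, sub_add_cancel]

theorem gapsComparable_crit (i : ι → Fin f.N) : GapsComparable f ρ S n fun e => f.c (i e) := by
  obtain ⟨D, Φ, hΦ⟩ := f.exists_hasDistortionGauge
  obtain ⟨C, hC, hsteps⟩ := exists_hasComparableSteps hpair
  choose K s hK hs hpower using f.exists_hasPowerLaw
  have hbound : ∀ i, ∃ L, ∀ n, |f.gap ρ n (f.c i)| ≤ L * |f.gap ρ (n + 1) (f.c i)| :=
    fun i => ⟨_, fun n => (hpair n).abs_sub_le_of_hasPowerLaw hΦ hC (hsteps n) (hsteps (n + 1))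
      (hK i) (hs i) (hpower i)⟩
  choose L hL using hbound
  obtain ⟨M, hM⟩ := (Set.finite_range L).bddAbove
  exact isBigO_principal.mpr ⟨M, fun e _ => (hL (i e) (n e)).trans
    (mul_le_mul_of_nonneg_right (hM (mem_range_self _)) (abs_nonneg _))⟩

end ReturnPairs

theorem exists_iterate_eq_crit_add_int : ∀ {N : ℕ} {x : ℝ}, deriv (f.F^[N]) x = 0 →
    ∃ j < N, ∃ (i : Fin f.N) (m : ℤ), f.F^[j] x = f.c i + m
  | 0, x, h => by simp at h
  | N + 1, x, h => by
    have hdiff : DifferentiableAt ℝ (f.F^[N]) x := (f.differentiable.iterate N) x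
    rw [Function.iterate_succ', deriv_comp x (f.differentiable _) hdiff, mul_eq_zero] at h
    rcases h with h | h
    · exact ⟨N, N.lt_succ_self, f.critOnly _ h⟩
    · obtain ⟨j, hj, hcrit⟩ := exists_iterate_eq_crit_add_int h
      exact ⟨j, by lia, hcrit⟩

end MCM

/-! ### Atoms of the auxiliary partition -/

theorem returnAngle_add_mul_mem_uIcc {ρ : ℝ} (hirr : Irrational ρ) (hmem : ρ ∈ Ioo (0 : ℝ) 1)
    {n k : ℕ} (hk : k ≤ cfDigit ρ (n + 1)) :
    returnAngle ρ n + k * returnAngle ρ (n + 1) ∈ uIcc 0 (returnAngle ρ n) := by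
  have hneg := returnAngle_mul_succ_neg hirr hmem n
  have hneg' := returnAngle_mul_succ_neg hirr hmem (n + 1)
  rw [returnAngle_add_two] at hneg'
  have hk' : (k : ℝ) ≤ cfDigit ρ (n + 1) := by exact_mod_cast hk
  have _ : (0 : ℝ) ≤ k := k.cast_nonneg
  rw [Set.mem_uIcc]
  rcases mul_neg_iff.mp hneg with ⟨_, hθ'⟩ | ⟨_, hθ'⟩
  · have hlast := pos_of_mul_neg_right hneg' hθ'.le
    exact Or.inl ⟨by nlinarith, by nlinarith⟩
  · have hlast := neg_of_mul_neg_right hneg' hθ'.le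
    exact Or.inr ⟨by nlinarith, by nlinarith⟩

theorem qDen_add_mul_mul_sub (ρ : ℝ) (n k : ℕ) :
    ((qDen ρ n + k * qDen ρ (n + 1) : ℕ) : ℝ) * ρ - ((pNum ρ n + k * pNum ρ (n + 1) : ℤ) : ℝ) =
      returnAngle ρ n + k * returnAngle ρ (n + 1) := by
  simp only [returnAngle]
  push_cast
  ring

namespace MCM

open Asymptotics

/-- The lift of `f^{q_n + k q_{n+1}}` with the translation that makes it interpolate between
`closestReturn f ρ n` (`k = 0`) and `closestReturn f ρ (n + 2)` (`k = a_{n+1}`). -/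
def intermediateReturn (f : MCM) (ρ : ℝ) (n k : ℕ) : CircleDeg1Lift :=
  returnMap f.lift (qDen ρ n + k * qDen ρ (n + 1)) (pNum ρ n + k * pNum ρ (n + 1))

/-- The intervals between `x` and `y` are comparable to `I_n(x)` and to `I_n(y)`, uniformly over a
family `S` of levels `n` and pairs of points. -/
def AtomComparable (f : MCM) (ρ : ℝ) {ι : Type*} (S : Set ι) (n : ι → ℕ) (x y : ι → ℝ) : Prop :=
  ((fun e => y e - x e) =Θ[𝓟 S] fun e => f.gap ρ (n e) (x e)) ∧
    (fun e => f.gap ρ (n e) (x e)) =Θ[𝓟 S] fun e => f.gap ρ (n e) (y e)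

variable {f : MCM} {ρ : ℝ}

theorem intermediateReturn_apply (n k : ℕ) (x : ℝ) : f.intermediateReturn ρ n k x =
    f.F^[qDen ρ n + k * qDen ρ (n + 1)] x - ((pNum ρ n + k * pNum ρ (n + 1) : ℕ) : ℤ) := by
  rw [intermediateReturn, returnMap_apply, lift_pow_apply]
  push_cast
  rfl

theorem intermediateReturn_cfDigit (n : ℕ) :
    f.intermediateReturn ρ n (cfDigit ρ (n + 1)) = f.closestReturn ρ (n + 2) := by
  rw [intermediateReturn, closestReturn, qDen, pNum, add_comm, add_comm (pNum ρ n : ℤ)]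
  push_cast
  rfl

theorem closestReturn_intermediateReturn (n k : ℕ) (x : ℝ) :
    f.closestReturn ρ (n + 1) (f.intermediateReturn ρ n k x) =
      f.intermediateReturn ρ n (k + 1) x := by
  rw [closestReturn, intermediateReturn, returnMap_returnMap, intermediateReturn]
  congr 2 <;> push_cast <;> ring

section Order

variable (hirr : Irrational ρ) (hmem : ρ ∈ Ioo (0 : ℝ) 1) (hrot : HasRotationNumber f.F ρ)
include hirr hrot

theorem intermediateReturn_mem_uIcc_intermediateReturn {n i k j : ℕ} (hik : i ≤ k) (hkj : k ≤ j)
    (x : ℝ) : f.intermediateReturn ρ n k x ∈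
      uIcc (f.intermediateReturn ρ n i x) (f.intermediateReturn ρ n j x) := by
  have hτ := translationNumber_lift hrot
  refine returnMap_mem_uIcc (hτ.symm ▸ hirr) ?_ x
  have hik' : (i : ℝ) ≤ k := by exact_mod_cast hik
  have hkj' : (k : ℝ) ≤ j := by exact_mod_cast hkj
  simp only [hτ, qDen_add_mul_mul_sub, Set.mem_uIcc, add_le_add_iff_left]
  rcases le_total 0 (returnAngle ρ (n + 1)) with hθ | hθ
  · exact Or.inl ⟨mul_le_mul_of_nonneg_right hik' hθ, mul_le_mul_of_nonneg_right hkj' hθ⟩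
  · exact Or.inr ⟨mul_le_mul_of_nonpos_right hkj' hθ, mul_le_mul_of_nonpos_right hik' hθ⟩

include hmem

theorem intermediateReturn_mem_uIcc_closestReturn {n k : ℕ} (hk : k ≤ cfDigit ρ (n + 1)) (x : ℝ) :
    f.intermediateReturn ρ n k x ∈ uIcc x (f.closestReturn ρ n x) := by
  have hτ := translationNumber_lift hrot
  have hθ := returnAngle_add_mul_mem_uIcc hirr hmem hk
  have hret : f.intermediateReturn ρ n k x ∈
      uIcc (returnMap f.lift 0 0 x) (f.closestReturn ρ n x) := by
    refine returnMap_mem_uIcc (hτ.symm ▸ hirr) ?_ x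
    rw [hτ, qDen_add_mul_mul_sub]
    simpa [returnAngle] using hθ
  rwa [returnMap_zero_zero] at hret

end Order

end MCM

namespace MCM

open Asymptotics

variable {f : MCM} {ρ : ℝ} {ι : Type*} {S : Set ι} {n : ι → ℕ} {x y : ι → ℝ} {i₀ : Fin f.N}

theorem iterate_sub_eq_closestReturn (ℓ j : ℕ) (x : ℝ) :
    f.F^[j + qDen ρ ℓ] x - pNum ρ ℓ = f.closestReturn ρ ℓ (f.F^[j] x) := by
  rw [closestReturn_apply, add_comm, Function.iterate_add_apply]

theorem iterate_eq_intermediateReturn_add (n k j : ℕ) (x : ℝ) :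
    f.F^[j + qDen ρ n + k * qDen ρ (n + 1)] x =
      f.intermediateReturn ρ n k (f.F^[j] x) + ((pNum ρ n + k * pNum ρ (n + 1) : ℕ) : ℤ) := by
  rw [intermediateReturn_apply, sub_add_cancel, add_assoc, add_comm, Function.iterate_add_apply]

theorem AtomComparable.of_eq_add_int (h : AtomComparable f ρ S n x y) {x' y' : ι → ℝ} {m : ι → ℤ}
    (hx' : ∀ e ∈ S, x' e = x e + m e) (hy' : ∀ e ∈ S, y' e = y e + m e) :
    AtomComparable f ρ S n x' y' := by
  have hsub : (fun e => y' e - x' e) =ᶠ[𝓟 S] fun e => y e - x e :=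
    eventually_principal.mpr fun e he => by
      simp only [hx' e he, hy' e he, add_sub_add_right_eq_sub]
  have hx : (fun e => f.gap ρ (n e) (x' e)) =ᶠ[𝓟 S] fun e => f.gap ρ (n e) (x e) :=
    eventually_principal.mpr fun e he => by simp only [hx' e he, gap_add_int]
  have hy : (fun e => f.gap ρ (n e) (y' e)) =ᶠ[𝓟 S] fun e => f.gap ρ (n e) (y e) :=
    eventually_principal.mpr fun e he => by simp only [hy' e he, gap_add_int]
  exact ⟨(hsub.trans_isTheta h.1).trans_eventuallyEq hx.symm,
    (hx.trans_isTheta h.2).trans_eventuallyEq hy.symm⟩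

theorem AtomComparable.of_forall_or {A B : ι → Prop} (h : ∀ e ∈ S, A e ∨ B e)
    (hA : ∀ T : Set ι, (∀ e ∈ T, A e) → AtomComparable f ρ T n x y)
    (hB : ∀ T : Set ι, (∀ e ∈ T, B e) → AtomComparable f ρ T n x y) :
    AtomComparable f ρ S n x y := by
  have hle : 𝓟 S ≤ 𝓟 {e | A e} ⊔ 𝓟 {e | B e} := by
    rw [sup_principal]
    exact principal_mono.mpr h
  have hA' := hA {e | A e} fun _ he => he
  have hB' := hB {e | B e} fun _ he => he
  exact ⟨(hA'.1.sup hB'.1).mono hle, (hA'.2.sup hB'.2).mono hle⟩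

theorem AtomComparable.isTheta_gap (h : AtomComparable f ρ S n x y) {u : ι → ℝ}
    (hu : ∀ e ∈ S, u e = x e ∨ u e = y e) :
    (fun e => y e - x e) =Θ[𝓟 S] fun e => f.gap ρ (n e) (u e) := by
  have hle : 𝓟 S ≤ 𝓟 {e ∈ S | u e = x e} ⊔ 𝓟 {e ∈ S | u e = y e} := by
    rw [sup_principal]
    exact principal_mono.mpr fun e he => (hu e he).imp (And.intro he) (And.intro he)
  refine IsTheta.mono (IsTheta.sup ?_ ?_) hle
  · exact (h.1.mono (principal_mono.mpr (sep_subset S _))).trans_eventuallyEq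
      (eventually_principal.mpr fun e he => by simp only [he.2])
  · exact ((h.1.trans h.2).mono (principal_mono.mpr (sep_subset S _))).trans_eventuallyEq
      (eventually_principal.mpr fun e he => by simp only [he.2])

section Atoms

variable (hirr : Irrational ρ) (hmem : ρ ∈ Ioo (0 : ℝ) 1) (hrot : HasRotationNumber f.F ρ)
include hirr hmem hrot

theorem gapsComparable_iterate_crit (i : Fin f.N) {j : ι → ℕ}
    (hj : ∀ e ∈ S, j e ≤ qDen ρ (n e + 1)) :
    GapsComparable f ρ S n fun e => f.F^[j e] (f.c i) :=
  have hpair := isReturnPair hirr hmem hrot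
  (gapsComparable_crit hpair fun _ => i).iterate hpair hj

theorem gapsComparable_intermediateReturn {k j : ι → ℕ}
    (hk : ∀ e ∈ S, CritTime f ρ i₀ (n e) (k e) ∨ k e = 0)
    (hj : ∀ e ∈ S, j e ≤ qDen ρ (n e + 1)) :
    GapsComparable f ρ S n fun e => f.intermediateReturn ρ (n e) (k e) (f.F^[j e] (f.c i₀)) := by
  have hpair := isReturnPair hirr hmem hrot
  suffices h : GapsComparable f ρ S n fun e =>
      f.F^[qDen ρ (n e) + k e * qDen ρ (n e + 1)] (f.c i₀) by
    refine (h.iterate hpair hj).of_eq_add_int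
      (m := fun e => -((pNum ρ (n e) + k e * pNum ρ (n e + 1) : ℕ) : ℤ)) fun e _ => ?_
    rw [← Function.iterate_add_apply, ← add_assoc, iterate_eq_intermediateReturn_add]
    push_cast
    ring
  refine .of_forall_or hk (fun T hT => ?_) fun T hT => ?_
  · have : Nonempty (Fin f.N) := ⟨i₀⟩
    choose! z hz hderiv using fun e he => (hT e he).2
    choose! l hl i m hcrit using fun e he => exists_iterate_eq_crit_add_int (hderiv e he)
    refine (gapsComparable_iff_of_mem_uIcc_succ hpair (y := z) fun e he => ?_).mp ?_
    · simpa only [atomSet, iterate_sub_eq_closestReturn] using hz e he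
    · exact gapsComparable_of_iterate hpair (fun e he => (hl e he).le)
        ((gapsComparable_crit hpair i).of_eq_add_int hcrit)
  · refine (gapsComparable_iterate_crit hirr hmem hrot i₀ fun e _ =>
      qDen_le_succ hirr hmem (n e)).of_eq_add_int (m := 0) fun e he => ?_
    simp [hT e he]

theorem atomComparable_closestReturn_succ (h : GapsComparable f ρ S n x) :
    AtomComparable f ρ S n x fun e => f.closestReturn ρ (n e + 1) (x e) :=
  have hpair := isReturnPair hirr hmem hrot
  ⟨⟨gap_succ_isBigO_gap hpair, h⟩, (gap_closestReturn_succ_isTheta hpair).symm⟩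

theorem atomComparable_closestReturn_add_two (h : GapsComparable f ρ S n x)
    (h' : GapsComparable f ρ S (fun e => n e + 1) x) :
    AtomComparable f ρ S n x fun e => f.closestReturn ρ (n e + 2) (x e) := by
  have hpair := isReturnPair hirr hmem hrot
  refine ⟨⟨(gap_succ_isBigO_gap hpair).trans (gap_succ_isBigO_gap hpair), h.trans h'⟩,
    (gap_isTheta_of_mem_uIcc hpair fun e _ => ?_).symm⟩
  rw [← intermediateReturn_cfDigit]
  exact intermediateReturn_mem_uIcc_closestReturn hirr hmem hrot le_rfl (x e)

/-- A bridge contains an image of the atom following its critical spot, and is contained in an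
image of `I_n(c₀)`. -/
theorem atomComparable_intermediateReturn {i j : ι → ℕ} (hij : ∀ e ∈ S, i e + 1 < j e)
    (hj : ∀ e ∈ S, j e ≤ cfDigit ρ (n e + 1))
    (h : GapsComparable f ρ S n fun e => f.intermediateReturn ρ (n e) (i e) (x e)) :
    AtomComparable f ρ S n (fun e => f.intermediateReturn ρ (n e) (i e + 1) (x e))
      fun e => f.intermediateReturn ρ (n e) (j e) (x e) := by
  have hpair := isReturnPair hirr hmem hrot
  have hfirst : ∀ e ∈ S, f.intermediateReturn ρ (n e) (i e + 1) (x e) ∈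
      uIcc (x e) (f.closestReturn ρ (n e) (x e)) := fun e he =>
    intermediateReturn_mem_uIcc_closestReturn hirr hmem hrot ((hij e he).le.trans (hj e he)) _
  have hlast : ∀ e ∈ S, f.intermediateReturn ρ (n e) (j e) (x e) ∈
      uIcc (x e) (f.closestReturn ρ (n e) (x e)) := fun e he =>
    intermediateReturn_mem_uIcc_closestReturn hirr hmem hrot (hj e he) _
  have hgap := gap_isTheta_of_mem_uIcc hpair hfirst
  refine ⟨⟨IsBigO.trans ?_ hgap.isBigO_symm, ?_⟩,
    hgap.trans (gap_isTheta_of_mem_uIcc hpair hlast).symm⟩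
  · refine isBigO_principal.mpr ⟨1, fun e he => ?_⟩
    rw [one_mul]
    exact abs_sub_le_of_uIcc_subset_uIcc (uIcc_subset_uIcc (hfirst e he) (hlast e he))
  · have hspot : GapsComparable f ρ S n fun e => f.intermediateReturn ρ (n e) (i e + 1) (x e) := by
      refine (gapsComparable_iff_of_mem_uIcc_succ hpair fun e _ => ?_).mpr h
      rw [closestReturn_intermediateReturn]
      exact right_mem_uIcc
    refine IsBigO.trans hspot (isBigO_principal.mpr ⟨1, fun e he => ?_⟩)
    rw [one_mul, gap, closestReturn_intermediateReturn]
    exact abs_sub_left_of_mem_uIcc (intermediateReturn_mem_uIcc_intermediateReturn hirr hrot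
      (Nat.le_succ _) (hij e he) _)

theorem atomComparable_bridge {i k j : ι → ℕ}
    (hbridge : ∀ e ∈ S, IsBridgePair f ρ i₀ (n e) (i e) (k e)) (hlt : ∀ e ∈ S, i e + 1 < k e)
    (hj : ∀ e ∈ S, j e ≤ qDen ρ (n e + 1)) :
    AtomComparable f ρ S n
      (fun e => f.F^[j e + qDen ρ (n e) + (i e + 1) * qDen ρ (n e + 1)] (f.c i₀))
      fun e => f.F^[j e + qDen ρ (n e) + k e * qDen ρ (n e + 1)] (f.c i₀) -
        (((k e - 1 - i e) * pNum ρ (n e + 1) : ℕ) : ℝ) := by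
  have hk : ∀ e ∈ S, k e ≤ cfDigit ρ (n e + 1) := fun e he =>
    (hbridge e he).2.2.2.elim (fun h => h.1.le) fun h => h.le
  refine (atomComparable_intermediateReturn hirr hmem hrot hlt hk
    (gapsComparable_intermediateReturn hirr hmem hrot (fun e he => (hbridge e he).1)
      hj)).of_eq_add_int
    (m := fun e => ((pNum ρ (n e) + (i e + 1) * pNum ρ (n e + 1) : ℕ) : ℤ)) ?_ ?_ <;>
    intro e he <;> simp only [iterate_eq_intermediateReturn_add]
  obtain ⟨d, hd⟩ := Nat.exists_eq_add_of_lt (hlt e he)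
  rw [show k e - 1 - i e = d + 1 by lia, hd]
  push_cast
  ring

theorem atomComparable_of_pStarAtomEnds {e : ι → ℝ × ℝ}
    (he : ∀ t ∈ S, PStarAtomEnds f ρ i₀ (n t) (e t)) :
    AtomComparable f ρ S n (fun t => (e t).1) fun t => (e t).2 := by
  refine .of_forall_or he ?spot fun _ h => .of_forall_or h ?bridge fun _ h =>
    .of_forall_or h ?long ?short
  case spot =>
    intro T hT
    choose! i j hi hj heq using hT
    refine (atomComparable_closestReturn_succ hirr hmem hrot
      (gapsComparable_intermediateReturn hirr hmem hrot hi fun t ht => (hj t ht).le)).of_eq_add_int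
      (m := fun t => ((pNum ρ (n t) + i t * pNum ρ (n t + 1) : ℕ) : ℤ)) ?_ ?_ <;> intro t ht <;>
      simp only [heq t ht, iterate_eq_intermediateReturn_add, closestReturn_intermediateReturn]
    push_cast
    ring
  case bridge =>
    intro T hT
    choose! i k j hik hlt hj heq using hT
    refine (atomComparable_bridge hirr hmem hrot hik hlt fun t ht => (hj t ht).le).of_eq_add_int
      (m := 0) ?_ ?_ <;> intro t ht <;> simp [heq t ht]
  case long =>
    intro T hT
    choose! j hj heq using hT
    refine (atomComparable_closestReturn_add_two hirr hmem hrot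
      (gapsComparable_iterate_crit hirr hmem hrot i₀ fun t ht => (hj t ht).le)
      (gapsComparable_iterate_crit hirr hmem hrot i₀ fun t ht => (hj t ht).le.trans
        (qDen_le_succ hirr hmem _))).of_eq_add_int (m := 0) ?_ ?_ <;> intro t ht <;>
      simp [heq t ht, iterate_sub_eq_closestReturn]
  case short =>
    intro T hT
    choose! j hj heq using hT
    refine (atomComparable_closestReturn_succ hirr hmem hrot
      (gapsComparable_iterate_crit hirr hmem hrot i₀ fun t ht => (hj t ht).le.trans
        (qDen_le_succ hirr hmem _))).of_eq_add_int (m := 0) ?_ ?_ <;> intro t ht <;>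
      simp [heq t ht, iterate_sub_eq_closestReturn]

end Atoms

end MCM

open Asymptotics in
theorem exists_one_lt_forall_of_isTheta {ι : Type*} {S : Set ι} {a b : ι → ℝ}
    (h : a =Θ[𝓟 S] b) :
    ∃ K, 1 < K ∧ ∀ e ∈ S, K⁻¹ * |b e| ≤ |a e| ∧ |a e| ≤ K * |b e| := by
  obtain ⟨C, hC⟩ := isBigO_principal.mp h.1
  obtain ⟨C', hC'⟩ := isBigO_principal.mp h.2
  have hone : 1 < max 2 (max C C') := one_lt_two.trans_le (le_max_left _ _)
  refine ⟨max 2 (max C C'), hone, fun e he => ⟨?_, ?_⟩⟩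
  · rw [inv_mul_le_iff₀ (zero_lt_one.trans hone)]
    exact (hC' e he).trans (mul_le_mul_of_nonneg_right
      ((le_max_right _ _).trans (le_max_right _ _)) (norm_nonneg _))
  · exact (hC e he).trans (mul_le_mul_of_nonneg_right
      ((le_max_left _ _).trans (le_max_right _ _)) (norm_nonneg _))

/-- **Proposition: consecutive atoms of `P*_n(c₀)` are comparable.**
There is `K > 1` depending only on `f` such that any two atoms of the auxiliary
partition `P*_n(c₀)` which share an endpoint on the circle have comparable lengths. -/
theorem consecutive_pstar_atoms_comparable
    (f : MCM) (ρ : ℝ) (hirr : Irrational ρ) (hmem : ρ ∈ Set.Ioo (0 : ℝ) 1)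
    (hrot : HasRotationNumber f.F ρ) (i₀ : Fin f.N) :
    ∃ K : ℝ, 1 < K ∧ ∀ (n : ℕ) (e e' : ℝ × ℝ),
      PStarAtomEnds f ρ i₀ n e → PStarAtomEnds f ρ i₀ n e' →
      (∃ u ∈ ({e.1, e.2} : Set ℝ), ∃ u' ∈ ({e'.1, e'.2} : Set ℝ),
        ∃ k : ℤ, u' = u + (k : ℝ)) →
      K⁻¹ * |e'.2 - e'.1| ≤ |e.2 - e.1| ∧ |e.2 - e.1| ≤ K * |e'.2 - e'.1| := by
  let S : Set (ℕ × (ℝ × ℝ) × (ℝ × ℝ)) :=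
    {t | PStarAtomEnds f ρ i₀ t.1 t.2.1 ∧ PStarAtomEnds f ρ i₀ t.1 t.2.2 ∧
      ∃ u ∈ ({t.2.1.1, t.2.1.2} : Set ℝ), ∃ u' ∈ ({t.2.2.1, t.2.2.2} : Set ℝ),
        ∃ k : ℤ, u' = u + (k : ℝ)}
  choose! u hu u' hu' k hk using fun t (ht : t ∈ S) => ht.2.2
  have hleft := (MCM.atomComparable_of_pStarAtomEnds hirr hmem hrot
    fun t (ht : t ∈ S) => ht.1).isTheta_gap hu
  have hright := (MCM.atomComparable_of_pStarAtomEnds hirr hmem hrot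
    fun t (ht : t ∈ S) => ht.2.1).isTheta_gap hu'
  have hgap : (fun t => f.gap ρ t.1 (u' t)) =ᶠ[𝓟 S] fun t => f.gap ρ t.1 (u t) :=
    eventually_principal.mpr fun t ht => by simp only [hk t ht, MCM.gap_add_int]
  obtain ⟨K, hK, hbound⟩ :=
    exists_one_lt_forall_of_isTheta (hleft.trans (hright.trans_eventuallyEq hgap).symm)
  exact ⟨K, hK, fun n e e' he he' hadj => hbound (n, e, e') ⟨he, he', hadj⟩⟩
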